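/- arXiv:2302.07772 — 3 statements merged into one kernel-verified Lean document; each statement's English description precedes it below -/
import Mathlib

section
/- For all constants K, K' > 0 and β ≥ 0 there exists C_β > 0 depending only on β, K, K' such that the following holds. Let n, d ∈ ℕ with n ≥ 2 and d ≤ n², let W satisfy Assumptions 1–4 with constants K, K', β, let W_1,…,W_d be independent copies of W, and set X = (1/d) ∑_{s=1}^d ( W_s ⊗ conj(W_s) − E(W_s ⊗ conj(W_s)) ). Then both ‖E(XX*)‖ ≤ (1/d)(1 + C_β/(log n)^{α_β}) and ‖E(X*X)‖ ≤ (1/d)(1 + C_β/(log n)^{α_β}), where α_β = max(β/2, 2). -/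
open MeasureTheory ProbabilityTheory Matrix
open scoped Kronecker ENNReal

/-- The (Borel) measurable space structure on matrices, obtained entrywise. -/
noncomputable instance matrixMeasurableSpace {m n α : Type*} [MeasurableSpace α] :
    MeasurableSpace (Matrix m n α) :=
  inferInstanceAs (MeasurableSpace (m → n → α))

/-- The ℓ²→ℓ² operator norm of a square matrix over `ℝ` or `ℂ`. -/
noncomputable def Matrix.opNorm2 {𝕜 : Type*} [RCLike 𝕜] {n : Type*} [Fintype n] [DecidableEq n]
    (A : Matrix n n 𝕜) : ℝ :=
  ‖LinearMap.toContinuousLinearMap (Matrix.toEuclideanLin A)‖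

/-- `Matrix.sval A k` is the `(k+1)`-st largest singular value of `A`, characterized via
best approximation in operator norm by matrices of rank at most `k`
(the Eckart–Young–Mirsky theorem); in particular `Matrix.sval A 0` is the largest singular
value `s_1(A)` and `Matrix.sval A 1` is the second largest singular value `s_2(A)`. -/
noncomputable def Matrix.sval {𝕜 : Type*} [RCLike 𝕜] {n : Type*} [Fintype n] [DecidableEq n]
    (A : Matrix n n 𝕜) (k : ℕ) : ℝ :=
  ⨅ B : {B : Matrix n n 𝕜 // B.rank ≤ k}, Matrix.opNorm2 (A - B.1)

/-- Entrywise expectation of a random matrix. -/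
noncomputable def matExp {Ω : Type*} [MeasurableSpace Ω] (μ : Measure Ω)
    {m n : Type*} (W : Ω → Matrix m n ℂ) : Matrix m n ℂ :=
  Matrix.of fun i j => ∫ ω, W ω i j ∂μ

/-- Assumptions 1–4 of the paper on an `n × n` random matrix `W` with variance profile `η`,
with constants `K` (Assumption 3), `K'` (Assumption 4) and parameter `β ≥ 0`:
the entries are independent, centered, have variances `η i j`, the variance matrix `η` is
doubly sub-stochastic, the entries satisfy the moment growth condition
`(E|W_{ij}|^{2p})^{1/p} ≤ K p^β η_{ij}`, and `max η_{ij} ≤ K'/(log n)^{α_β}` where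
`α_β = max (β/2) 2`. (Membership in every `L^p` is included so that all moments exist.) -/
structure PaperAssumptions {Ω : Type*} [MeasurableSpace Ω] (μ : Measure Ω)
    (n : ℕ) (K K' β : ℝ) (η : Matrix (Fin n) (Fin n) ℝ)
    (W : Ω → Matrix (Fin n) (Fin n) ℂ) : Prop where
  entries_indep : iIndepFun
      (fun (p : Fin n × Fin n) ω => W ω p.1 p.2) μ
  entries_memLp : ∀ i j (p : ℕ), MemLp (fun ω => W ω i j) p μ
  entries_centered : ∀ i j, ∫ ω, W ω i j ∂μ = 0
  entries_variance : ∀ i j, ∫ ω, ‖W ω i j‖ ^ 2 ∂μ = η i j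
  row_sums : ∀ i, ∑ j, η i j ≤ 1
  col_sums : ∀ j, ∑ i, η i j ≤ 1
  moment_growth : ∀ p : ℕ, 1 ≤ p → ∀ i j,
      (∫ ω, ‖W ω i j‖ ^ (2 * p) ∂μ) ^ ((1 : ℝ) / p) ≤ K * (p : ℝ) ^ β * η i j
  max_variance : ∀ i j, η i j ≤ K' / Real.log n ^ max (β / 2) 2

/-!
Since `W_1, …, W_d` are independent, `E (X Xᴴ)` is `d⁻²` times the sum of the covariance matrices
of `W_s ⊗ conj W_s`. The covariance of `W_{ij} conj W_{i'j'}` and `W_{lj} conj W_{l'j'}` vanishes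
unless `(l, l') = (i, i')`, or `(l, l') = (i', i)` and `j = j'`. Summed over `j, j'`, the first case
contributes at most `(∑ η_{ij}) (∑ η_{i'j'}) ≤ 1` plus a fourth-moment term of order `max η`, and
the second is itself of order `max η`. The Schur test turns these row sums into a bound on the
operator norm, and conjugate transposition exchanges `X Xᴴ` and `Xᴴ X`.
-/

section

open scoped ComplexConjugate

section OperatorNorm

variable {𝕜 m : Type*} [RCLike 𝕜] [Fintype m]

lemma norm_sum_mul_sq_le (a x : m → 𝕜) :
    ‖∑ j, a j * x j‖ ^ 2 ≤ (∑ j, ‖a j‖) * ∑ j, ‖a j‖ * ‖x j‖ ^ 2 :=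
  calc ‖∑ j, a j * x j‖ ^ 2 ≤ (∑ j, ‖a j‖ * ‖x j‖) ^ 2 := by
        gcongr
        simpa only [norm_mul] using norm_sum_le Finset.univ fun j => a j * x j
    _ ≤ (∑ j, ‖a j‖) * ∑ j, ‖a j‖ * ‖x j‖ ^ 2 :=
        Finset.sum_sq_le_sum_mul_sum_of_sq_le_mul _ (fun _ _ => by positivity)
          (fun _ _ => by positivity) fun _ _ => (by ring : _ = _).le

variable [DecidableEq m]

lemma opNorm2_sum_le {S : Type*} (s : Finset S) (A : S → Matrix m m 𝕜) :
    opNorm2 (∑ i ∈ s, A i) ≤ ∑ i ∈ s, opNorm2 (A i) := by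
  simp only [opNorm2, map_sum]
  exact norm_sum_le s _

lemma opNorm2_smul (c : 𝕜) (A : Matrix m m 𝕜) : opNorm2 (c • A) = ‖c‖ * opNorm2 A := by
  simp only [opNorm2, map_smul, norm_smul]

lemma opNorm2_le_of_sum_norm_le {A : Matrix m m 𝕜} {B : ℝ} (hB : 0 ≤ B)
    (hrow : ∀ i, ∑ j, ‖A i j‖ ≤ B) (hcol : ∀ j, ∑ i, ‖A i j‖ ≤ B) : opNorm2 A ≤ B := by
  refine ContinuousLinearMap.opNorm_le_bound _ hB fun x => ?_
  refine le_of_sq_le_sq ?_ (by positivity)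
  rw [mul_pow, EuclideanSpace.norm_sq_eq, EuclideanSpace.norm_sq_eq]
  calc ∑ i, ‖∑ j, A i j * x j‖ ^ 2
      ≤ ∑ i, B * ∑ j, ‖A i j‖ * ‖x j‖ ^ 2 := by
        gcongr with i
        exact (norm_sum_mul_sq_le (A i) x).trans (by gcongr; exact hrow i)
    _ = B * ∑ j, (∑ i, ‖A i j‖) * ‖x j‖ ^ 2 := by
        rw [← Finset.mul_sum, Finset.sum_comm]
        simp only [Finset.sum_mul]
    _ ≤ B * ∑ j, B * ‖x j‖ ^ 2 := by
        gcongr with j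
        exact hcol j
    _ = B ^ 2 * ∑ j, ‖x j‖ ^ 2 := by rw [← Finset.mul_sum, sq, mul_assoc]

lemma opNorm2_le_of_isHermitian {A : Matrix m m 𝕜} (hA : A.IsHermitian) {B : ℝ} (hB : 0 ≤ B)
    (hrow : ∀ i, ∑ j, ‖A i j‖ ≤ B) : opNorm2 A ≤ B := by
  refine opNorm2_le_of_sum_norm_le hB hrow fun j => ?_
  simpa only [← hA.apply j, norm_star] using hrow j

end OperatorNorm

variable {Ω : Type*} [MeasurableSpace Ω] {μ : Measure Ω}

section Covariance

/-- The covariance `E[(f - E f) conj (g - E g)]` of two complex random variables; Mathlib's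
`covariance` is for real ones. -/
noncomputable def complexCov (μ : Measure Ω) (f g : Ω → ℂ) : ℂ :=
  ∫ ω, (f ω - ∫ ω', f ω' ∂μ) * conj (g ω - ∫ ω', g ω' ∂μ) ∂μ

variable {f g : Ω → ℂ}

lemma conj_complexCov (f g : Ω → ℂ) : conj (complexCov μ f g) = complexCov μ g f := by
  simp only [complexCov, ← integral_conj, map_mul, Complex.conj_conj, mul_comm]

lemma complexCov_conj_conj (f g : Ω → ℂ) :
    complexCov μ (fun ω => conj (f ω)) (fun ω => conj (g ω)) = conj (complexCov μ f g) := by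
  simp only [complexCov, ← integral_conj, map_mul, map_sub]

lemma integrable_mul_conj (hf : MemLp f 2 μ) (hg : MemLp g 2 μ) :
    Integrable (fun ω => f ω * conj (g ω)) μ :=
  hf.integrable_mul hg.star

lemma complexCov_eq_sub [IsProbabilityMeasure μ] (hf : MemLp f 2 μ) (hg : MemLp g 2 μ) :
    complexCov μ f g = ∫ ω, f ω * conj (g ω) ∂μ - (∫ ω, f ω ∂μ) * conj (∫ ω, g ω ∂μ) := by
  have hfi : Integrable f μ := hf.integrable one_le_two
  have hgi : Integrable (fun ω => conj (g ω)) μ := hg.star.integrable one_le_two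
  have hfg := integrable_mul_conj hf hg
  have hcross : Integrable (fun ω => (∫ ω', f ω' ∂μ) * conj (g ω)) μ := hgi.const_mul _
  have hfg_sub : Integrable
      (fun ω => f ω * conj (g ω) - (∫ ω', f ω' ∂μ) * conj (g ω)) μ := hfg.sub hcross
  have hf_centered : Integrable (fun ω => f ω * conj (∫ ω', g ω' ∂μ)
      - (∫ ω', f ω' ∂μ) * conj (∫ ω', g ω' ∂μ)) μ := (hfi.mul_const _).sub (integrable_const _)
  simp only [complexCov, map_sub, sub_mul, mul_sub]
  rw [integral_sub hfg_sub hf_centered, integral_sub hfg hcross,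
    integral_sub (hfi.mul_const _) (integrable_const _), integral_mul_const, integral_const_mul,
    integral_conj]
  simp

lemma complexCov_eq_zero_of_indepFun [IsProbabilityMeasure μ] (hf : Integrable f μ)
    (hg : AEStronglyMeasurable g μ) (h : IndepFun f g μ) : complexCov μ f g = 0 := by
  have hcentered : IndepFun (fun ω => f ω - ∫ ω', f ω' ∂μ)
      (fun ω => conj (g ω - ∫ ω', g ω' ∂μ)) μ :=
    h.comp (φ := fun z => z - ∫ ω', f ω' ∂μ) (ψ := fun z => conj (z - ∫ ω', g ω' ∂μ))
      (by fun_prop) (by fun_prop)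
  rw [complexCov, hcentered.integral_fun_mul_eq_mul_integral (by fun_prop)
    (hg.sub aestronglyMeasurable_const).star, integral_sub hf (integrable_const _)]
  simp

lemma integral_norm_sub_integral_sq_le [IsProbabilityMeasure μ] (hf : MemLp f 2 μ) :
    ∫ ω, ‖f ω - ∫ ω', f ω' ∂μ‖ ^ 2 ∂μ ≤ ∫ ω, ‖f ω‖ ^ 2 ∂μ := by
  have hcov := complexCov_eq_sub hf hf
  simp only [complexCov, Complex.mul_conj', ← Complex.ofReal_pow, integral_complex_ofReal] at hcov
  have hreal : ∫ ω, ‖f ω - ∫ ω', f ω' ∂μ‖ ^ 2 ∂μ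
      = ∫ ω, ‖f ω‖ ^ 2 ∂μ - ‖∫ ω, f ω ∂μ‖ ^ 2 := mod_cast hcov
  rw [hreal]
  exact sub_le_self _ (sq_nonneg _)

lemma norm_complexCov_self_le [IsProbabilityMeasure μ] (hf : MemLp f 2 μ) :
    ‖complexCov μ f f‖ ≤ ∫ ω, ‖f ω‖ ^ 2 ∂μ := by
  refine (norm_integral_le_integral_norm _).trans ?_
  simpa only [norm_mul, RCLike.norm_conj, ← sq] using integral_norm_sub_integral_sq_le hf

lemma norm_complexCov_conj_self_le [IsProbabilityMeasure μ] (hf : MemLp f 2 μ) :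
    ‖complexCov μ f (fun ω => conj (f ω))‖ ≤ ∫ ω, ‖f ω‖ ^ 2 ∂μ := by
  refine (norm_integral_le_integral_norm _).trans ?_
  simpa only [norm_mul, integral_conj, ← map_sub, RCLike.norm_conj, ← sq]
    using integral_norm_sub_integral_sq_le hf

lemma memLp_two_mul_conj (hf : MemLp f 4 μ) (hg : MemLp g 4 μ) :
    MemLp (fun ω => f ω * conj (g ω)) 2 μ := by
  have : ENNReal.HolderTriple 4 4 2 := ENNReal.HolderTriple.of_toReal
    ⟨by norm_num, by norm_num, by norm_num⟩
  exact hg.star.mul' hf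

end Covariance

section IndependentFamily

variable {ι : Type*}

lemma indepFun_prodMk₃_of_ne {β : ι → Type*} [∀ i, MeasurableSpace (β i)]
    {ξ : ∀ i, Ω → β i} (hξ : iIndepFun ξ μ) (hm : ∀ i, AEMeasurable (ξ i) μ) {a b c e : ι}
    (hab : a ≠ b) (hac : a ≠ c) (hae : a ≠ e) :
    IndepFun (ξ a) (fun ω => (ξ b ω, ξ c ω, ξ e ω)) μ := by
  classical
  have hdisj : Disjoint ({a} : Finset ι) {b, c, e} := by simp [hab, hac, hae]
  have hfst : Measurable fun v : (∀ i : ({a} : Finset ι), β i) => v ⟨a, by simp⟩ :=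
    measurable_pi_apply _
  have hsnd : Measurable fun v : (∀ i : ({b, c, e} : Finset ι), β i) =>
      (v ⟨b, by simp⟩, v ⟨c, by simp⟩, v ⟨e, by simp⟩) :=
    (measurable_pi_apply _).prodMk ((measurable_pi_apply _).prodMk (measurable_pi_apply _))
  exact (hξ.indepFun_finset₀ {a} {b, c, e} hdisj hm).comp hfst hsnd

lemma iIndepFun_of_identDistrib [Finite ι] {β : ι → Type*} [∀ i, MeasurableSpace (β i)]
    {Ω' : Type*} [MeasurableSpace Ω'] {ν : Measure Ω'} [IsProbabilityMeasure μ]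
    [IsProbabilityMeasure ν] {ξ : ∀ i, Ω → β i} {ζ : ∀ i, Ω' → β i}
    (h : IdentDistrib (fun ω i => ξ i ω) (fun ω i => ζ i ω) μ ν) (hζ : iIndepFun ζ ν) :
    iIndepFun ξ μ := by
  cases nonempty_fintype ι
  have hmarginal (i : ι) : IdentDistrib (ξ i) (ζ i) μ ν := h.comp (measurable_pi_apply i)
  rw [iIndepFun_iff_map_fun_eq_pi_map fun i => (hmarginal i).aemeasurable_fst, h.map_eq,
    (iIndepFun_iff_map_fun_eq_pi_map fun i => (hmarginal i).aemeasurable_snd).1 hζ]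
  simp only [(hmarginal _).map_eq]

/-- The random variables `ξ i` are independent and centred, with variances `v i` and fourth
moments at most `Q * v i ^ 2`. -/
structure CenteredIndepFamily (μ : Measure Ω) (Q : ℝ) (v : ι → ℝ) (ξ : ι → Ω → ℂ) : Prop where
  indep : iIndepFun ξ μ
  memLp : ∀ i, MemLp (ξ i) 4 μ
  centered : ∀ i, ∫ ω, ξ i ω ∂μ = 0
  variance : ∀ i, ∫ ω, ‖ξ i ω‖ ^ 2 ∂μ = v i
  fourth_moment : ∀ i, ∫ ω, ‖ξ i ω‖ ^ 4 ∂μ ≤ Q * v i ^ 2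

namespace CenteredIndepFamily

variable {Q : ℝ} {v : ι → ℝ} {ξ : ι → Ω → ℂ} {a b c e : ι}

lemma aemeasurable (h : CenteredIndepFamily μ Q v ξ) (i : ι) : AEMeasurable (ξ i) μ :=
  (h.memLp i).aestronglyMeasurable.aemeasurable

lemma variance_nonneg (h : CenteredIndepFamily μ Q v ξ) (i : ι) : 0 ≤ v i := by
  rw [← h.variance i]
  positivity

lemma precomp {κ : Type*} {φ : κ → ι} (hφ : φ.Injective) (h : CenteredIndepFamily μ Q v ξ) :
    CenteredIndepFamily μ Q (v ∘ φ) (ξ ∘ φ) where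
  indep := iIndepFun.precomp (g := φ) hφ h.indep
  memLp i := h.memLp (φ i)
  centered i := h.centered (φ i)
  variance i := h.variance (φ i)
  fourth_moment i := h.fourth_moment (φ i)

lemma comp_conj (h : CenteredIndepFamily μ Q v ξ) :
    CenteredIndepFamily μ Q v (fun i ω => conj (ξ i ω)) where
  indep := h.indep.comp (fun _ => starRingEnd ℂ) (fun _ => by fun_prop)
  memLp i := (h.memLp i).star
  centered i := by rw [integral_conj, h.centered, map_zero]
  variance i := by simpa only [RCLike.norm_conj] using h.variance i
  fourth_moment i := by simpa only [RCLike.norm_conj] using h.fourth_moment i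

lemma of_identDistrib [Finite ι] {Ω' : Type*} [MeasurableSpace Ω'] {ν : Measure Ω'}
    [IsProbabilityMeasure μ] [IsProbabilityMeasure ν] {ζ : ι → Ω' → ℂ}
    (h : CenteredIndepFamily ν Q v ζ)
    (hid : IdentDistrib (fun ω i => ξ i ω) (fun ω i => ζ i ω) μ ν) :
    CenteredIndepFamily μ Q v ξ := by
  have hmarginal (i : ι) : IdentDistrib (ξ i) (ζ i) μ ν := hid.comp (measurable_pi_apply i)
  have hmoment (i : ι) (p : ℕ) : ∫ ω, ‖ξ i ω‖ ^ p ∂μ = ∫ ω, ‖ζ i ω‖ ^ p ∂ν :=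
    (hmarginal i).norm.pow.integral_eq
  exact
    { indep := iIndepFun_of_identDistrib hid h.indep
      memLp := fun i => (hmarginal i).memLp_iff.2 (h.memLp i)
      centered := fun i => (hmarginal i).integral_eq.trans (h.centered i)
      variance := fun i => (hmoment i 2).trans (h.variance i)
      fourth_moment := fun i => (hmoment i 4).trans_le (h.fourth_moment i) }

lemma memLp_mul_conj (h : CenteredIndepFamily μ Q v ξ) (a b : ι) :
    MemLp (fun ω => ξ a ω * conj (ξ b ω)) 2 μ :=
  memLp_two_mul_conj (h.memLp a) (h.memLp b)

lemma integral_mul_comp_eq_zero (h : CenteredIndepFamily μ Q v ξ) (hab : a ≠ b) (hac : a ≠ c)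
    (hae : a ≠ e) {ψ : ℂ × ℂ × ℂ → ℂ} (hψ : Measurable ψ) :
    ∫ ω, ξ a ω * ψ (ξ b ω, ξ c ω, ξ e ω) ∂μ = 0 := by
  have hindep := (indepFun_prodMk₃_of_ne h.indep h.aemeasurable hab hac hae).comp
    measurable_id hψ
  have hmeas : AEMeasurable (fun ω => ψ (ξ b ω, ξ c ω, ξ e ω)) μ := hψ.comp_aemeasurable
    ((h.aemeasurable b).prodMk ((h.aemeasurable c).prodMk (h.aemeasurable e)))
  refine (hindep.integral_fun_mul_eq_mul_integral (h.memLp a).aestronglyMeasurable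
    hmeas.aestronglyMeasurable).trans ?_
  simp only [Function.id_comp, h.centered, zero_mul]

lemma complexCov_eq_zero_of_isolated [IsProbabilityMeasure μ] (h : CenteredIndepFamily μ Q v ξ)
    (hab : a ≠ b) (hac : a ≠ c) (hae : a ≠ e) :
    complexCov μ (fun ω => ξ a ω * conj (ξ b ω))
      (fun ω => ξ c ω * conj (ξ e ω)) = 0 := by
  have hmean := h.integral_mul_comp_eq_zero hab hac hae
    (ψ := fun z => conj z.1) (by fun_prop)
  have hprod := h.integral_mul_comp_eq_zero hab hac hae
    (ψ := fun z => conj z.1 * conj (z.2.1 * conj z.2.2))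
    (by fun_prop)
  rw [complexCov_eq_sub (h.memLp_mul_conj a b) (h.memLp_mul_conj c e), hmean]
  simpa only [mul_assoc, zero_mul, sub_zero] using hprod

lemma complexCov_eq_zero_of_disjoint [IsProbabilityMeasure μ] (h : CenteredIndepFamily μ Q v ξ)
    (hac : a ≠ c) (hae : a ≠ e) (hbc : b ≠ c) (hbe : b ≠ e) :
    complexCov μ (fun ω => ξ a ω * conj (ξ b ω))
      (fun ω => ξ c ω * conj (ξ e ω)) = 0 := by
  have hmul : Measurable fun z : ℂ × ℂ => z.1 * conj z.2 := by fun_prop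
  exact complexCov_eq_zero_of_indepFun ((h.memLp_mul_conj a b).integrable one_le_two)
    (h.memLp_mul_conj c e).aestronglyMeasurable
    ((h.indep.indepFun_prodMk_prodMk₀ h.aemeasurable a b c e hac hae hbc hbe).comp hmul hmul)

lemma complexCov_mul_conj_eq_zero [IsProbabilityMeasure μ] (h : CenteredIndepFamily μ Q v ξ)
    (hne : ¬(c = a ∧ e = b)) (hne_swap : ¬(c = b ∧ e = a)) :
    complexCov μ (fun ω => ξ a ω * conj (ξ b ω))
      (fun ω => ξ c ω * conj (ξ e ω)) = 0 := by
  have conj_swap (i j : ι) : (fun ω => ξ i ω * conj (ξ j ω)) =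
      fun ω => conj (ξ j ω * conj (ξ i ω)) := by
    funext ω
    rw [map_mul, Complex.conj_conj, mul_comm]
  by_cases hdisj : a ≠ c ∧ a ≠ e ∧ b ≠ c ∧ b ≠ e
  · exact h.complexCov_eq_zero_of_disjoint hdisj.1 hdisj.2.1 hdisj.2.2.1 hdisj.2.2.2
  -- If each index is matched by another, the matching is one of the two excluded ones or `a = b`,
  -- `c = e`; the latter falls under `hdisj` or else all four indices agree, which is excluded too.
  have isolated : (a ≠ b ∧ a ≠ c ∧ a ≠ e) ∨ (b ≠ a ∧ b ≠ e ∧ b ≠ c) ∨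
      (c ≠ e ∧ c ≠ a ∧ c ≠ b) ∨ (e ≠ c ∧ e ≠ b ∧ e ≠ a) := by grind
  rcases isolated with ⟨h₁, h₂, h₃⟩ | ⟨h₁, h₂, h₃⟩ | ⟨h₁, h₂, h₃⟩ | ⟨h₁, h₂, h₃⟩
  · exact h.complexCov_eq_zero_of_isolated h₁ h₂ h₃
  · rw [conj_swap a b, conj_swap c e, complexCov_conj_conj,
      h.complexCov_eq_zero_of_isolated h₁ h₂ h₃, map_zero]
  · rw [← conj_complexCov, h.complexCov_eq_zero_of_isolated h₁ h₂ h₃, map_zero]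
  · rw [conj_swap a b, conj_swap c e, complexCov_conj_conj, conj_complexCov,
      h.complexCov_eq_zero_of_isolated h₁ h₂ h₃]

lemma norm_complexCov_mul_conj_le [IsProbabilityMeasure μ] [DecidableEq ι]
    (h : CenteredIndepFamily μ Q v ξ) (a b c e : ι) :
    ‖complexCov μ (fun ω => ξ a ω * conj (ξ b ω))
      (fun ω => ξ c ω * conj (ξ e ω))‖ ≤
      if (c = a ∧ e = b) ∨ (c = b ∧ e = a) then ∫ ω, ‖ξ a ω‖ ^ 2 * ‖ξ b ω‖ ^ 2 ∂μ else 0 := by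
  split_ifs with hpair
  · have hself := norm_complexCov_self_le (h.memLp_mul_conj a b)
    have hconj := norm_complexCov_conj_self_le (h.memLp_mul_conj a b)
    simp only [norm_mul, RCLike.norm_conj, mul_pow, map_mul, Complex.conj_conj] at hself hconj
    rcases hpair with ⟨rfl, rfl⟩ | ⟨rfl, rfl⟩
    · exact hself
    · simpa only [mul_comm (ξ c _)] using hconj
  · rw [not_or] at hpair
    rw [h.complexCov_mul_conj_eq_zero hpair.1 hpair.2, norm_zero]

lemma integral_sq_mul_sq_le [DecidableEq ι] (h : CenteredIndepFamily μ Q v ξ) (a b : ι) :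
    ∫ ω, ‖ξ a ω‖ ^ 2 * ‖ξ b ω‖ ^ 2 ∂μ ≤ v a * v b + if a = b then Q * v a ^ 2 else 0 := by
  split_ifs with hab
  · subst hab
    simp only [← pow_add, Nat.reduceAdd]
    exact (h.fourth_moment a).trans
      (le_add_of_nonneg_left (mul_nonneg (h.variance_nonneg a) (h.variance_nonneg a)))
  · have hsq : Measurable fun z : ℂ => ‖z‖ ^ 2 := by fun_prop
    have hmeas (i : ι) : AEStronglyMeasurable (fun ω => ‖ξ i ω‖ ^ 2) μ :=
      (hsq.comp_aemeasurable (h.aemeasurable i)).aestronglyMeasurable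
    have hmul := ((h.indep.indepFun hab).comp hsq hsq).integral_fun_mul_eq_mul_integral
      (hmeas a) (hmeas b)
    simp only [Function.comp_apply, h.variance] at hmul
    rw [hmul, add_zero]

end CenteredIndepFamily

end IndependentFamily

section RandomMatrix

variable {m k : Type*}

lemma measurable_matrix_apply {α : Type*} [MeasurableSpace α] (i : m) (j : k) :
    Measurable fun M : Matrix m k α => M i j :=
  (measurable_pi_apply j).comp (measurable_pi_apply (X := fun _ : m => k → α) i)

lemma measurable_matrix_of_apply {α β : Type*} [MeasurableSpace α] [MeasurableSpace β]
    {F : β → Matrix m k α} (hF : ∀ i j, Measurable fun x => F x i j) : Measurable F :=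
  measurable_pi_lambda _ fun i => measurable_pi_lambda _ fun j => hF i j

lemma measurable_conjTranspose : Measurable fun M : Matrix m k ℂ => Mᴴ :=
  measurable_matrix_of_apply fun i j =>
    Complex.continuous_conj.measurable.comp (measurable_matrix_apply j i)

lemma matExp_conjTranspose (A : Ω → Matrix m k ℂ) :
    matExp μ (fun ω => (A ω)ᴴ) = (matExp μ A)ᴴ := by
  ext i j
  exact integral_conj

lemma matExp_const_smul (c : ℂ) (A : Ω → Matrix m k ℂ) :
    matExp μ (fun ω => c • A ω) = c • matExp μ A := by
  ext i j
  exact integral_const_mul c _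

lemma matExp_finset_sum {S : Type*} (s : Finset S) {A : S → Ω → Matrix m k ℂ}
    (hA : ∀ t ∈ s, ∀ i j, Integrable (fun ω => A t ω i j) μ) :
    matExp μ (fun ω => ∑ t ∈ s, A t ω) = ∑ t ∈ s, matExp μ (A t) := by
  ext i j
  simp only [matExp, of_apply, Matrix.sum_apply]
  exact integral_finsetSum s fun t ht => hA t ht i j

variable [Fintype k]

/-- The matrix covariance `E[(A - E A)(B - E B)ᴴ]` of two random matrices. -/
noncomputable def matCov (μ : Measure Ω) (A B : Ω → Matrix m k ℂ) : Matrix m m ℂ :=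
  matExp μ fun ω => (A ω - matExp μ A) * (B ω - matExp μ B)ᴴ

lemma isHermitian_matCov_self (A : Ω → Matrix m k ℂ) : (matCov μ A A).IsHermitian := by
  rw [IsHermitian, matCov, ← matExp_conjTranspose]
  simp only [conjTranspose_mul, conjTranspose_conjTranspose]

variable [IsProbabilityMeasure μ]

lemma integrable_centered_mul_conjTranspose_apply {A B : Ω → Matrix m k ℂ}
    (hA : ∀ i j, MemLp (fun ω => A ω i j) 2 μ) (hB : ∀ i j, MemLp (fun ω => B ω i j) 2 μ)
    (i i' : m) :
    Integrable (fun ω => ((A ω - matExp μ A) * (B ω - matExp μ B)ᴴ) i i') μ := by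
  simp only [mul_apply, conjTranspose_apply, Matrix.sub_apply]
  exact integrable_finsetSum _ fun j _ => integrable_mul_conj
    ((hA i j).sub (memLp_const _)) ((hB i' j).sub (memLp_const _))

lemma matCov_apply {A B : Ω → Matrix m k ℂ} (hA : ∀ i j, MemLp (fun ω => A ω i j) 2 μ)
    (hB : ∀ i j, MemLp (fun ω => B ω i j) 2 μ) (i i' : m) :
    matCov μ A B i i' = ∑ j, complexCov μ (fun ω => A ω i j) (fun ω => B ω i' j) :=
  integral_finsetSum _ fun j _ => integrable_mul_conj
    ((hA i j).sub (memLp_const _)) ((hB i' j).sub (memLp_const _))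

lemma matCov_eq_zero_of_indepFun {A B : Ω → Matrix m k ℂ}
    (hA : ∀ i j, MemLp (fun ω => A ω i j) 2 μ) (hB : ∀ i j, MemLp (fun ω => B ω i j) 2 μ)
    (h : IndepFun A B μ) : matCov μ A B = 0 := by
  ext i i'
  rw [matCov_apply hA hB]
  exact Finset.sum_eq_zero fun j _ => complexCov_eq_zero_of_indepFun
    ((hA i j).integrable one_le_two) (hB i' j).aestronglyMeasurable
    (h.comp (measurable_matrix_apply i j) (measurable_matrix_apply i' j))

lemma matExp_sum_centered_mul_conjTranspose {S : Type*} [Fintype S] {A : S → Ω → Matrix m k ℂ}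
    (hA : ∀ s i j, MemLp (fun ω => A s ω i j) 2 μ)
    (hindep : Pairwise fun s t => IndepFun (A s) (A t) μ) :
    matExp μ (fun ω => (∑ s, (A s ω - matExp μ (A s))) * (∑ s, (A s ω - matExp μ (A s)))ᴴ) =
      ∑ s, matCov μ (A s) (A s) := by
  have hint (s t : S) := integrable_centered_mul_conjTranspose_apply (hA s) (hA t)
  simp only [conjTranspose_sum, Matrix.sum_mul]
  simp only [Matrix.mul_sum]
  rw [matExp_finset_sum _ fun s _ i j => by
    simpa only [Matrix.sum_apply] using integrable_finsetSum _ fun t _ => hint s t i j]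
  refine Finset.sum_congr rfl fun s _ => ?_
  rw [matExp_finset_sum _ fun t _ => hint s t]
  exact Fintype.sum_eq_single s fun t hts =>
    matCov_eq_zero_of_indepFun (hA s) (hA t) (hindep hts.symm)

lemma opNorm2_matExp_average_mul_conjTranspose_le [Fintype m] [DecidableEq m] {d : ℕ}
    {A : Fin d → Ω → Matrix m k ℂ} (hA : ∀ s i j, MemLp (fun ω => A s ω i j) 2 μ)
    (hindep : Pairwise fun s t => IndepFun (A s) (A t) μ) {B : ℝ}
    (hB : ∀ s, opNorm2 (matCov μ (A s) (A s)) ≤ B) {X : Ω → Matrix m k ℂ}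
    (hX : X = fun ω => (d : ℂ)⁻¹ • ∑ s, (A s ω - matExp μ (A s))) :
    opNorm2 (matExp μ fun ω => X ω * (X ω)ᴴ) ≤ 1 / d * B := by
  have hsum : opNorm2 (∑ s, matCov μ (A s) (A s)) ≤ d * B := by
    refine (opNorm2_sum_le _ _).trans ((Finset.sum_le_sum fun s _ => hB s).trans_eq ?_)
    simp
  simp only [hX, conjTranspose_smul, Matrix.smul_mul, Matrix.mul_smul, matExp_const_smul,
    matExp_sum_centered_mul_conjTranspose hA hindep, opNorm2_smul, norm_star, norm_inv,
    Complex.norm_natCast]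
  calc (d : ℝ)⁻¹ * ((d : ℝ)⁻¹ * opNorm2 (∑ s, matCov μ (A s) (A s)))
      ≤ (d : ℝ)⁻¹ * ((d : ℝ)⁻¹ * (d * B)) := by gcongr
    _ = 1 / d * B := by
        rcases eq_or_ne (d : ℝ) 0 with hd | hd
        · simp [hd]
        · field_simp

end RandomMatrix

section KroneckerConj

variable {m k : Type*}

/-- The Kronecker product `M ⊗ conj M` of a matrix with its entrywise conjugate. -/
def kroneckerConj (M : Matrix m k ℂ) : Matrix (m × m) (k × k) ℂ :=
  M ⊗ₖ M.map (starRingEnd ℂ)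

lemma kroneckerConj_apply (M : Matrix m k ℂ) (p : m × m) (r : k × k) :
    kroneckerConj M p r = M p.1 r.1 * conj (M p.2 r.2) := rfl

lemma conjTranspose_kroneckerConj (M : Matrix m k ℂ) :
    (kroneckerConj M)ᴴ = kroneckerConj Mᴴ := by
  ext p r
  simp [kroneckerConj_apply, mul_comm]

lemma measurable_kroneckerConj : Measurable (kroneckerConj : Matrix m k ℂ → _) :=
  measurable_matrix_of_apply fun p r =>
    (measurable_matrix_apply p.1 r.1).mul
      (Complex.continuous_conj.measurable.comp (measurable_matrix_apply p.2 r.2))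

variable {Q M : ℝ} {η : Matrix m k ℝ} {W : Ω → Matrix m k ℂ}

lemma CenteredIndepFamily.conjTranspose
    (hW : CenteredIndepFamily μ Q (fun p : m × k => η p.1 p.2) fun p ω => W ω p.1 p.2) :
    CenteredIndepFamily μ Q (fun p : k × m => ηᵀ p.1 p.2) fun p ω => (W ω)ᴴ p.1 p.2 :=
  (hW.precomp Prod.swap_injective).comp_conj

lemma memLp_kroneckerConj_apply
    (hW : CenteredIndepFamily μ Q (fun p : m × k => η p.1 p.2) fun p ω => W ω p.1 p.2)
    (p : m × m) (r : k × k) : MemLp (fun ω => kroneckerConj (W ω) p r) 2 μ :=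
  hW.memLp_mul_conj (p.1, r.1) (p.2, r.2)

lemma sum_norm_complexCov_kroneckerConj_le [Fintype m] [DecidableEq k] [IsProbabilityMeasure μ]
    (hW : CenteredIndepFamily μ Q (fun p : m × k => η p.1 p.2) fun p ω => W ω p.1 p.2)
    (p : m × m) (r : k × k) :
    ∑ q, ‖complexCov μ (fun ω => kroneckerConj (W ω) p r) (fun ω => kroneckerConj (W ω) q r)‖ ≤
      ∫ ω, ‖W ω p.1 r.1‖ ^ 2 * ‖W ω p.2 r.2‖ ^ 2 ∂μ
        + if r.1 = r.2 then ∫ ω, ‖W ω p.1 r.1‖ ^ 2 * ‖W ω p.2 r.2‖ ^ 2 ∂μ else 0 := by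
  classical
  set T : ℝ := ∫ ω, ‖W ω p.1 r.1‖ ^ 2 * ‖W ω p.2 r.2‖ ^ 2 ∂μ
  have hT : 0 ≤ T := by positivity
  have hq (q : m × m) : ‖complexCov μ (fun ω => kroneckerConj (W ω) p r)
      (fun ω => kroneckerConj (W ω) q r)‖ ≤
      (if q = p then T else 0) + if q = p.swap then (if r.1 = r.2 then T else 0) else 0 := by
    refine (hW.norm_complexCov_mul_conj_le (p.1, r.1) (p.2, r.2) (q.1, r.1) (q.2, r.2)).trans ?_
    grind [Prod.ext_iff]
  refine (Finset.sum_le_sum fun q _ => hq q).trans_eq ?_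
  simp only [Finset.sum_add_distrib, Finset.sum_ite_eq', Finset.mem_univ, if_true]

variable [Fintype k]

lemma sum_mul_le_of_le_of_sum_le_one {u w : k → ℝ} (hM : 0 ≤ M) (hu : ∀ j, u j ≤ M)
    (hw : ∀ j, 0 ≤ w j) (hsum : ∑ j, w j ≤ 1) : ∑ j, u j * w j ≤ M :=
  calc ∑ j, u j * w j ≤ ∑ j, M * w j := by
        gcongr with j
        · exact hw j
        · exact hu j
    _ = M * ∑ j, w j := (Finset.mul_sum ..).symm
    _ ≤ M := mul_le_of_le_one_right hM hsum

lemma sum_integral_sq_mul_sq_diag_le (hQ : 0 ≤ Q) (hM : 0 ≤ M)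
    (hW : CenteredIndepFamily μ Q (fun p : m × k => η p.1 p.2) fun p ω => W ω p.1 p.2)
    (hrow : ∀ i, ∑ j, η i j ≤ 1) (hmax : ∀ i j, η i j ≤ M) (i i' : m) :
    ∑ j, ∫ ω, ‖W ω i j‖ ^ 2 * ‖W ω i' j‖ ^ 2 ∂μ ≤ (1 + Q) * M := by
  classical
  have hη (i : m) (j : k) : 0 ≤ η i j := hW.variance_nonneg (i, j)
  have hsum (i i' : m) : ∑ j, η i j * η i' j ≤ M :=
    sum_mul_le_of_le_of_sum_le_one hM (hmax i) (hη i') (hrow i')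
  calc ∑ j, ∫ ω, ‖W ω i j‖ ^ 2 * ‖W ω i' j‖ ^ 2 ∂μ
      ≤ ∑ j, (η i j * η i' j + Q * (η i j * η i j)) := by
        gcongr with j
        refine (hW.integral_sq_mul_sq_le (i, j) (i', j)).trans ?_
        gcongr
        split_ifs
        · rw [sq]
        · exact mul_nonneg hQ (mul_self_nonneg _)
    _ = ∑ j, η i j * η i' j + Q * ∑ j, η i j * η i j := by
        rw [Finset.sum_add_distrib, Finset.mul_sum]
    _ ≤ M + Q * M := by gcongr <;> exact hsum _ _
    _ = (1 + Q) * M := by ring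

lemma sum_integral_sq_mul_sq_le (hQ : 0 ≤ Q) (hM : 0 ≤ M)
    (hW : CenteredIndepFamily μ Q (fun p : m × k => η p.1 p.2) fun p ω => W ω p.1 p.2)
    (hrow : ∀ i, ∑ j, η i j ≤ 1) (hmax : ∀ i j, η i j ≤ M) (i i' : m) :
    ∑ r : k × k, ∫ ω, ‖W ω i r.1‖ ^ 2 * ‖W ω i' r.2‖ ^ 2 ∂μ ≤ 1 + Q * M := by
  classical
  have hη (i : m) (j : k) : 0 ≤ η i j := hW.variance_nonneg (i, j)
  calc ∑ r : k × k, ∫ ω, ‖W ω i r.1‖ ^ 2 * ‖W ω i' r.2‖ ^ 2 ∂μ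
      ≤ ∑ r : k × k, (η i r.1 * η i' r.2
          + if r.1 = r.2 then Q * (η i r.1 * η i r.1) else 0) := by
        gcongr with r
        refine (hW.integral_sq_mul_sq_le (i, r.1) (i', r.2)).trans ?_
        have hnonneg : 0 ≤ Q * (η i r.1 * η i r.1) := mul_nonneg hQ (mul_self_nonneg _)
        simp only [Prod.mk.injEq, sq]
        gcongr
        split_ifs <;> simp_all
    _ = (∑ j, η i j) * (∑ j, η i' j) + Q * ∑ j, η i j * η i j := by
        rw [Finset.sum_mul_sum, Finset.mul_sum]
        simp only [Finset.sum_add_distrib, Fintype.sum_prod_type, Finset.sum_ite_eq,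
          Finset.mem_univ, if_true]
    _ ≤ 1 + Q * M := by
        gcongr
        · exact mul_le_one₀ (hrow i) (Finset.sum_nonneg fun j _ => hη i' j) (hrow i')
        · exact sum_mul_le_of_le_of_sum_le_one hM (hmax i) (hη i) (hrow i)

variable [Fintype m] [DecidableEq m] [IsProbabilityMeasure μ]

lemma opNorm2_matCov_kroneckerConj_le (hQ : 0 ≤ Q) (hM : 0 ≤ M)
    (hW : CenteredIndepFamily μ Q (fun p : m × k => η p.1 p.2) fun p ω => W ω p.1 p.2)
    (hrow : ∀ i, ∑ j, η i j ≤ 1) (hmax : ∀ i j, η i j ≤ M) :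
    opNorm2 (matCov μ (fun ω => kroneckerConj (W ω)) fun ω => kroneckerConj (W ω)) ≤
      1 + (2 * Q + 1) * M := by
  classical
  refine opNorm2_le_of_isHermitian (isHermitian_matCov_self _) (by positivity) fun p => ?_
  have hL2 := memLp_kroneckerConj_apply hW
  set T : k × k → ℝ := fun r => ∫ ω, ‖W ω p.1 r.1‖ ^ 2 * ‖W ω p.2 r.2‖ ^ 2 ∂μ
  calc ∑ q, ‖matCov μ (fun ω => kroneckerConj (W ω)) (fun ω => kroneckerConj (W ω)) p q‖
      ≤ ∑ q, ∑ r, ‖complexCov μ (fun ω => kroneckerConj (W ω) p r)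
          (fun ω => kroneckerConj (W ω) q r)‖ := by
        gcongr with q
        rw [matCov_apply hL2 hL2]
        exact norm_sum_le _ _
    _ ≤ ∑ r, (T r + if r.1 = r.2 then T r else 0) := by
        rw [Finset.sum_comm]
        gcongr with r
        exact sum_norm_complexCov_kroneckerConj_le hW p r
    _ = ∑ r, T r + ∑ j, T (j, j) := by
        simp only [Finset.sum_add_distrib, Fintype.sum_prod_type, Finset.sum_ite_eq,
          Finset.mem_univ, if_true]
    _ ≤ (1 + Q * M) + (1 + Q) * M := by
        gcongr
        · exact sum_integral_sq_mul_sq_le hQ hM hW hrow hmax p.1 p.2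
        · exact sum_integral_sq_mul_sq_diag_le hQ hM hW hrow hmax p.1 p.2
    _ = 1 + (2 * Q + 1) * M := by ring

lemma opNorm2_matExp_average_kroneckerConj_le {d : ℕ} {η : Fin d → Matrix m k ℝ}
    {W : Fin d → Ω → Matrix m k ℂ} (hQ : 0 ≤ Q) (hM : 0 ≤ M)
    (hW : ∀ s, CenteredIndepFamily μ Q (fun p : m × k => η s p.1 p.2) fun p ω => W s ω p.1 p.2)
    (hrow : ∀ s i, ∑ j, η s i j ≤ 1) (hmax : ∀ s i j, η s i j ≤ M)
    (hindep : Pairwise fun s t => IndepFun (W s) (W t) μ) {X : Ω → Matrix (m × m) (k × k) ℂ}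
    (hX : X = fun ω => (d : ℂ)⁻¹ • ∑ s,
      (kroneckerConj (W s ω) - matExp μ fun ω' => kroneckerConj (W s ω'))) :
    opNorm2 (matExp μ fun ω => X ω * (X ω)ᴴ) ≤ 1 / d * (1 + (2 * Q + 1) * M) :=
  opNorm2_matExp_average_mul_conjTranspose_le (fun s => memLp_kroneckerConj_apply (hW s))
    (fun _ _ hst => (hindep hst).comp measurable_kroneckerConj measurable_kroneckerConj)
    (fun s => opNorm2_matCov_kroneckerConj_le hQ hM (hW s) (hrow s) (hmax s)) hX

theorem sigma_param_bound_general [DecidableEq k] {d : ℕ} {η : Fin d → Matrix m k ℝ}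
    {W : Fin d → Ω → Matrix m k ℂ} (hQ : 0 ≤ Q) (hM : 0 ≤ M)
    (hW : ∀ s, CenteredIndepFamily μ Q (fun p : m × k => η s p.1 p.2) fun p ω => W s ω p.1 p.2)
    (hrow : ∀ s i, ∑ j, η s i j ≤ 1) (hcol : ∀ s j, ∑ i, η s i j ≤ 1)
    (hmax : ∀ s i j, η s i j ≤ M) (hindep : Pairwise fun s t => IndepFun (W s) (W t) μ)
    {X : Ω → Matrix (m × m) (k × k) ℂ}
    (hX : X = fun ω => (d : ℂ)⁻¹ • ∑ s,
      (kroneckerConj (W s ω) - matExp μ fun ω' => kroneckerConj (W s ω'))) :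
    opNorm2 (matExp μ fun ω => X ω * (X ω)ᴴ) ≤ 1 / d * (1 + (2 * Q + 1) * M) ∧
      opNorm2 (matExp μ fun ω => (X ω)ᴴ * X ω) ≤ 1 / d * (1 + (2 * Q + 1) * M) := by
  refine ⟨opNorm2_matExp_average_kroneckerConj_le hQ hM hW hrow hmax hindep hX, ?_⟩
  have hX_conjTranspose : (fun ω => (X ω)ᴴ) = fun ω => (d : ℂ)⁻¹ • ∑ s,
      (kroneckerConj (W s ω)ᴴ - matExp μ fun ω' => kroneckerConj (W s ω')ᴴ) := by
    simp only [hX, conjTranspose_smul, conjTranspose_sum, conjTranspose_sub, star_inv₀,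
      star_natCast, ← conjTranspose_kroneckerConj, matExp_conjTranspose]
  simpa only [conjTranspose_conjTranspose] using
    opNorm2_matExp_average_kroneckerConj_le (W := fun s ω => (W s ω)ᴴ) hQ hM
      (fun s => (hW s).conjTranspose) hcol (fun s j i => hmax s i j)
      (fun _ _ hst => (hindep hst).comp measurable_conjTranspose measurable_conjTranspose)
      hX_conjTranspose

end KroneckerConj

namespace PaperAssumptions

variable {n : ℕ} {K K' β : ℝ} {η : Matrix (Fin n) (Fin n) ℝ}
  {W : Ω → Matrix (Fin n) (Fin n) ℂ}

lemma fourth_moment_le (h : PaperAssumptions μ n K K' β η W) (i j : Fin n) :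
    ∫ ω, ‖W ω i j‖ ^ 4 ∂μ ≤ (K * 2 ^ β) ^ 2 * η i j ^ 2 := by
  have hnonneg : 0 ≤ ∫ ω, ‖W ω i j‖ ^ 4 ∂μ := by positivity
  have hgrowth : √(∫ ω, ‖W ω i j‖ ^ 4 ∂μ) ≤ K * 2 ^ β * η i j := by
    simpa [Real.sqrt_eq_rpow] using h.moment_growth 2 one_le_two i j
  calc ∫ ω, ‖W ω i j‖ ^ 4 ∂μ = √(∫ ω, ‖W ω i j‖ ^ 4 ∂μ) ^ 2 := (Real.sq_sqrt hnonneg).symm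
    _ ≤ (K * 2 ^ β * η i j) ^ 2 := by gcongr
    _ = (K * 2 ^ β) ^ 2 * η i j ^ 2 := mul_pow ..

lemma centeredIndepFamily (h : PaperAssumptions μ n K K' β η W) :
    CenteredIndepFamily μ ((K * 2 ^ β) ^ 2) (fun p : Fin n × Fin n => η p.1 p.2)
      fun p ω => W ω p.1 p.2 where
  indep := h.entries_indep
  memLp p := mod_cast h.entries_memLp p.1 p.2 4
  centered p := h.entries_centered p.1 p.2
  variance p := h.entries_variance p.1 p.2
  fourth_moment p := h.fourth_moment_le p.1 p.2

lemma centeredIndepFamily_of_identDistrib [IsProbabilityMeasure μ] {Ω' : Type*}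
    [MeasurableSpace Ω'] {ν : Measure Ω'} [IsProbabilityMeasure ν]
    (h : PaperAssumptions μ n K K' β η W) {V : Ω' → Matrix (Fin n) (Fin n) ℂ}
    (hV : IdentDistrib V W ν μ) :
    CenteredIndepFamily ν ((K * 2 ^ β) ^ 2) (fun p : Fin n × Fin n => η p.1 p.2)
      fun p ω => V ω p.1 p.2 :=
  h.centeredIndepFamily.of_identDistrib <| hV.comp <| measurable_pi_lambda
    (fun (M : Matrix (Fin n) (Fin n) ℂ) (p : Fin n × Fin n) => M p.1 p.2)
    fun p => measurable_matrix_apply p.1 p.2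

end PaperAssumptions

end

/-- Lemma 2.6 of the paper: for `X = (1/d) ∑_s (W_s ⊗ conj(W_s) − E(W_s ⊗ conj(W_s)))` with
`W_1, …, W_d` independent copies of a random matrix `W` satisfying Assumptions 1–4,
`‖E(XX*)‖ , ‖E(X*X)‖ ≤ (1/d)(1 + C_β/(log n)^{α_β})`, where `C_β > 0` depends only
on `β, K, K'` and `α_β = max (β/2) 2`. -/
theorem sigma_param_bound :
    ∀ K K' β : ℝ, 0 < K → 0 < K' → 0 ≤ β →
    ∃ Cβ : ℝ, 0 < Cβ ∧
    ∀ n d : ℕ, 2 ≤ n → d ≤ n ^ 2 →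
    ∀ (Ω : Type) (_ : MeasurableSpace Ω) (μ : Measure Ω), IsProbabilityMeasure μ →
    ∀ (η : Matrix (Fin n) (Fin n) ℝ) (W : Ω → Matrix (Fin n) (Fin n) ℂ)
      (Ws : Fin d → Ω → Matrix (Fin n) (Fin n) ℂ),
      PaperAssumptions μ n K K' β η W →
      iIndepFun Ws μ →
      (∀ s, IdentDistrib (Ws s) W μ μ) →
      ∀ X : Ω → Matrix (Fin n × Fin n) (Fin n × Fin n) ℂ,
      X = (fun ω => (d : ℂ)⁻¹ • ∑ s,
            (Ws s ω ⊗ₖ (Ws s ω).map (starRingEnd ℂ)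
              - matExp μ fun ω' => Ws s ω' ⊗ₖ (Ws s ω').map (starRingEnd ℂ))) →
      Matrix.opNorm2 (matExp μ fun ω => X ω * (X ω)ᴴ)
          ≤ (1 / d) * (1 + Cβ / Real.log n ^ max (β / 2) 2)
        ∧ Matrix.opNorm2 (matExp μ fun ω => (X ω)ᴴ * X ω)
          ≤ (1 / d) * (1 + Cβ / Real.log n ^ max (β / 2) 2) := by
  intro K K' β _ hK' _
  refine ⟨(2 * (K * 2 ^ β) ^ 2 + 1) * K', by positivity, ?_⟩
  intro n d _ _ Ω _ μ _ η W Ws hW hindep hWs X hX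
  rw [mul_div_assoc]
  exact sigma_param_bound_general (sq_nonneg _) (by positivity)
    (fun s => hW.centeredIndepFamily_of_identDistrib (hWs s)) (fun _ => hW.row_sums)
    (fun _ => hW.col_sums) (fun _ => hW.max_variance) (fun _ _ hst => hindep.indepFun hst) hX
end

section
/- For all constants K, K' > 0 and β ≥ 0 there exists a constant C_β > 0 (depending only on β, K, K') such that the following holds. Let n, d ∈ ℕ with n ≥ 2 and d ≤ n², let W satisfy Assumptions 1–4 with constants K, K', β, let W_1,…,W_d be independent copies of W, and set X = (1/d) ∑_{s=1}^d ( W_s ⊗ conj(W_s) − E(W_s ⊗ conj(W_s)) ). Then ‖Cov(X)‖ ≤ (1/d) · C_β/(log n)^{2α_β}, where Cov(X) is the n⁴ × n⁴ matrix with entries Cov(X)_{(a,b),(c,e)} = E(X_{ab} · conj(X_{ce})) for indices a,b,c,e ∈ {1,…,n²} (note E(X) = 0), and α_β = max(β/2, 2). -/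
open MeasureTheory ProbabilityTheory Matrix
open scoped Kronecker ENNReal

/-!
Write `w_e` for the entries of `W`. Each entry of `W ⊗ conj W` is a product `w_e conj(w_f)`.
Averaging over `d` independent copies divides covariances by `d`, so it suffices to treat one
copy. If `w_e conj(w_f)` and `w_g conj(w_h)` do not involve the same unordered pair of indices,
then either one index occurs only once among `e, f, g, h`, and its centred factor splits off, or
`e = f ≠ g = h` and the two products are independent. Hence every row and every column of the
covariance matrix has at most two nonzero entries. Each of them is bounded by a fourth moment of
the entries of `W`, and the Schur test concludes.
-/

open scoped ComplexConjugate

section SchurTest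

variable {𝕜 ι : Type*} [RCLike 𝕜] [Fintype ι]

lemma norm_mulVec_sq_le_sum_mul_sum {κ : Type*} (A : Matrix κ ι 𝕜) (v : ι → 𝕜) (p : κ) :
    ‖(A *ᵥ v) p‖ ^ 2 ≤ (∑ q, ‖A p q‖) * ∑ q, ‖A p q‖ * ‖v q‖ ^ 2 :=
  calc ‖(A *ᵥ v) p‖ ^ 2 ≤ (∑ q, ‖A p q * v q‖) ^ 2 := by
        gcongr
        exact norm_sum_le _ _
    _ ≤ (∑ q, ‖A p q‖) * ∑ q, ‖A p q‖ * ‖v q‖ ^ 2 := by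
        refine Finset.sum_sq_le_sum_mul_sum_of_sq_le_mul _ (fun _ _ => by positivity)
          (fun _ _ => by positivity) fun q _ => le_of_eq ?_
        rw [norm_mul]
        ring

lemma sum_norm_le_two_mul_of_eq_zero {E : Type*} [SeminormedAddCommGroup E] {f : ι → E} {M : ℝ}
    (hM : ∀ i, ‖f i‖ ≤ M) (a b : ι) (hf : ∀ i, i ≠ a → i ≠ b → f i = 0) :
    ∑ i, ‖f i‖ ≤ 2 * M := by
  classical
  calc ∑ i, ‖f i‖ = ∑ i ∈ {a, b}, ‖f i‖ := by
        refine (Finset.sum_subset (Finset.subset_univ _) fun i _ hi => ?_).symm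
        simp only [Finset.mem_insert, Finset.mem_singleton, not_or] at hi
        rw [hf i hi.1 hi.2, norm_zero]
    _ ≤ ({a, b} : Finset ι).card • M := Finset.sum_le_card_nsmul _ _ _ fun i _ => hM i
    _ ≤ 2 * M := by
        have hM₀ : 0 ≤ M := (norm_nonneg _).trans (hM a)
        have hcard : (({a, b} : Finset ι).card : ℝ) ≤ 2 := by exact_mod_cast Finset.card_le_two
        rw [nsmul_eq_mul]
        gcongr

variable [DecidableEq ι] {A : Matrix ι ι 𝕜}

lemma opNorm2_le_sqrt_of_sum_norm_le {R C : ℝ} (hrow : ∀ p, ∑ q, ‖A p q‖ ≤ R)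
    (hcol : ∀ q, ∑ p, ‖A p q‖ ≤ C) : Matrix.opNorm2 A ≤ √(R * C) := by
  refine ContinuousLinearMap.opNorm_le_bound _ (Real.sqrt_nonneg _) fun v => ?_
  cases isEmpty_or_nonempty ι with
  | inl _ => simp [Subsingleton.elim v 0]
  | inr hι =>
    obtain ⟨i⟩ := hι
    have hR : 0 ≤ R := (Finset.sum_nonneg fun _ _ => norm_nonneg _).trans (hrow i)
    have hC : 0 ≤ C := (Finset.sum_nonneg fun _ _ => norm_nonneg _).trans (hcol i)
    refine le_of_sq_le_sq ?_ (by positivity)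
    rw [mul_pow, Real.sq_sqrt (mul_nonneg hR hC), EuclideanSpace.norm_sq_eq,
      EuclideanSpace.norm_sq_eq]
    calc ∑ p, ‖(A *ᵥ v.ofLp) p‖ ^ 2
        ≤ ∑ p, R * ∑ q, ‖A p q‖ * ‖v q‖ ^ 2 := by
          gcongr with p
          exact (norm_mulVec_sq_le_sum_mul_sum A _ p).trans (by gcongr; exact hrow p)
      _ = R * ∑ q, (∑ p, ‖A p q‖) * ‖v q‖ ^ 2 := by
          rw [← Finset.mul_sum, Finset.sum_comm]
          simp only [Finset.sum_mul]
      _ ≤ R * ∑ q, C * ‖v q‖ ^ 2 := by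
          gcongr with q
          exact hcol q
      _ = R * C * ∑ q, ‖v q‖ ^ 2 := by rw [← Finset.mul_sum, mul_assoc]

lemma opNorm2_le_two_mul_of_apply_eq_zero {M : ℝ} (hM : 0 ≤ M) (hA : ∀ p q, ‖A p q‖ ≤ M)
    (σ : Equiv.Perm ι) (hzero : ∀ p q, q ≠ p → q ≠ σ p → A p q = 0) :
    Matrix.opNorm2 A ≤ 2 * M := by
  have hrow (p : ι) : ∑ q, ‖A p q‖ ≤ 2 * M :=
    sum_norm_le_two_mul_of_eq_zero (hA p) p (σ p) (hzero p)
  have hcol (q : ι) : ∑ p, ‖A p q‖ ≤ 2 * M :=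
    sum_norm_le_two_mul_of_eq_zero (fun p => hA p q) q (σ.symm q) fun p hpq hσ =>
      hzero p q hpq.symm fun hq => hσ (σ.symm_apply_eq.2 hq).symm
  simpa [Real.sqrt_mul_self, hM] using opNorm2_le_sqrt_of_sum_norm_le hrow hcol

end SchurTest

/-- The covariance `E[(X - E X) conj(Y - E Y)]` of scalar random variables, conjugate-linear in the
second argument; `ProbabilityTheory.covariance` covers real-valued random variables only. -/
noncomputable def hermitianCov {Ω 𝕜 : Type*} [MeasurableSpace Ω] [RCLike 𝕜] (X Y : Ω → 𝕜)
    (μ : Measure Ω) : 𝕜 :=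
  ∫ ω, (X ω - μ[X]) * conj (Y ω - μ[Y]) ∂μ

section HermitianCov

variable {Ω 𝕜 : Type*} [MeasurableSpace Ω] [RCLike 𝕜] {μ : Measure Ω} {X Y : Ω → 𝕜}

lemma hermitianCov_swap (X Y : Ω → 𝕜) : hermitianCov Y X μ = conj (hermitianCov X Y μ) := by
  simp only [hermitianCov, ← integral_conj, map_mul, RCLike.conj_conj, mul_comm]

lemma hermitianCov_star_star (X Y : Ω → 𝕜) :
    hermitianCov (star X) (star Y) μ = conj (hermitianCov X Y μ) := by
  simp only [hermitianCov, ← integral_conj, map_mul, map_sub, Pi.star_apply, RCLike.star_def]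

lemma hermitianCov_comp_eq_of_identDistrib {𝓧 : Type*} [MeasurableSpace 𝓧] {U V : Ω → 𝓧}
    (hUV : IdentDistrib U V μ μ) {φ ψ : 𝓧 → 𝕜} (hφ : Measurable φ) (hψ : Measurable ψ) :
    hermitianCov (φ ∘ U) (ψ ∘ U) μ = hermitianCov (φ ∘ V) (ψ ∘ V) μ := by
  rw [hermitianCov, hermitianCov, (hUV.comp hφ).integral_eq, (hUV.comp hψ).integral_eq]
  exact (hUV.comp ((hφ.sub_const _).mul
    (RCLike.continuous_conj.measurable.comp (hψ.sub_const _)))).integral_eq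

lemma hermitianCov_mul_left_eq_zero_of_indepFun {U V : Ω → 𝕜}
    (hindep : U ⟂ᵢ[μ] fun ω => (V ω, Y ω)) (hU : AEStronglyMeasurable U μ)
    (hV : AEStronglyMeasurable V μ) (hY : AEStronglyMeasurable Y μ) (hU₀ : μ[U] = 0) :
    hermitianCov (U * V) Y μ = 0 := by
  have integral_mul_eq_zero {F : 𝕜 × 𝕜 → 𝕜} (hF : Measurable F) :
      ∫ ω, U ω * F (V ω, Y ω) ∂μ = 0 := by
    have hUF : U ⟂ᵢ[μ] fun ω => F (V ω, Y ω) := hindep.comp measurable_id hF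
    rw [hUF.integral_fun_mul_eq_mul_integral hU (hF.comp_aemeasurable
      (hV.aemeasurable.prodMk hY.aemeasurable)).aestronglyMeasurable, hU₀, zero_mul]
  have hUV : ∫ ω, U ω * V ω ∂μ = 0 := integral_mul_eq_zero measurable_fst
  have hF : Continuous fun z : 𝕜 × 𝕜 => z.1 * conj (z.2 - μ[Y]) :=
    continuous_fst.mul (RCLike.continuous_conj.comp (continuous_snd.sub continuous_const))
  simpa only [hermitianCov, Pi.mul_apply, hUV, sub_zero, mul_assoc] using
    integral_mul_eq_zero hF.measurable

variable [IsProbabilityMeasure μ]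

lemma hermitianCov_eq_zero_of_indepFun (hXY : X ⟂ᵢ[μ] Y) (hX : Integrable X μ)
    (hY : AEStronglyMeasurable Y μ) : hermitianCov X Y μ = 0 := by
  have hX₀ : ∫ ω, (X ω - μ[X]) ∂μ = 0 := by
    rw [integral_sub hX (integrable_const _), integral_const, probReal_univ, one_smul, sub_self]
  have hconj : Continuous fun z : 𝕜 => conj (z - μ[Y]) :=
    RCLike.continuous_conj.comp (continuous_id.sub continuous_const)
  have hcentered : (fun ω => X ω - μ[X]) ⟂ᵢ[μ] fun ω => conj (Y ω - μ[Y]) :=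
    hXY.comp (measurable_id.sub_const _) hconj.measurable
  rw [hermitianCov, hcentered.integral_fun_mul_eq_mul_integral
    (hX.aestronglyMeasurable.sub aestronglyMeasurable_const)
    (hconj.comp_aestronglyMeasurable hY), hX₀, zero_mul]

lemma integral_norm_sub_integral_sq_le_s5 {E : Type*} [NormedAddCommGroup E]
    [InnerProductSpace ℝ E] [CompleteSpace E] {Z : Ω → E} (hZ : MemLp Z 2 μ) :
    ∫ ω, ‖Z ω - μ[Z]‖ ^ 2 ∂μ ≤ ∫ ω, ‖Z ω‖ ^ 2 ∂μ := by
  have hZ_int : Integrable Z μ := hZ.integrable one_le_two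
  have hZ_sq : Integrable (fun ω => ‖Z ω‖ ^ 2) μ := hZ.integrable_norm_pow two_ne_zero
  have hinner : Integrable (fun ω => 2 * inner ℝ (Z ω) μ[Z]) μ := (hZ_int.inner_const _).const_mul 2
  have hcross : ∫ ω, inner ℝ (Z ω) μ[Z] ∂μ = ‖μ[Z]‖ ^ 2 := by
    simp_rw [real_inner_comm μ[Z], integral_inner hZ_int, real_inner_self_eq_norm_sq]
  calc ∫ ω, ‖Z ω - μ[Z]‖ ^ 2 ∂μ
      = ∫ ω, (‖Z ω‖ ^ 2 - 2 * inner ℝ (Z ω) μ[Z] + ‖μ[Z]‖ ^ 2) ∂μ := by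
        simp only [norm_sub_sq_real]
    _ = ∫ ω, ‖Z ω‖ ^ 2 ∂μ - ‖μ[Z]‖ ^ 2 := by
        rw [integral_add (f := fun ω => ‖Z ω‖ ^ 2 - 2 * inner ℝ (Z ω) μ[Z]) (hZ_sq.sub hinner)
          (integrable_const _), integral_sub hZ_sq hinner, integral_const_mul, hcross,
          integral_const, probReal_univ, one_smul]
        ring
    _ ≤ ∫ ω, ‖Z ω‖ ^ 2 ∂μ := sub_le_self _ (by positivity)

lemma norm_hermitianCov_le (hX : MemLp X 2 μ) (hY : MemLp Y 2 μ) :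
    ‖hermitianCov X Y μ‖ ≤ (∫ ω, ‖X ω‖ ^ 2 ∂μ + ∫ ω, ‖Y ω‖ ^ 2 ∂μ) / 2 := by
  have hX_sq : Integrable (fun ω => ‖X ω - μ[X]‖ ^ 2) μ :=
    (hX.sub (memLp_const _)).integrable_norm_pow two_ne_zero
  have hY_sq : Integrable (fun ω => ‖Y ω - μ[Y]‖ ^ 2) μ :=
    (hY.sub (memLp_const _)).integrable_norm_pow two_ne_zero
  calc ‖hermitianCov X Y μ‖
      ≤ ∫ ω, (‖X ω - μ[X]‖ ^ 2 + ‖Y ω - μ[Y]‖ ^ 2) / 2 ∂μ := by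
        refine norm_integral_le_of_norm_le ((hX_sq.add hY_sq).div_const 2) (.of_forall fun ω => ?_)
        rw [norm_mul, RCLike.norm_conj]
        linarith [two_mul_le_add_sq ‖X ω - μ[X]‖ ‖Y ω - μ[Y]‖]
    _ = (∫ ω, ‖X ω - μ[X]‖ ^ 2 ∂μ + ∫ ω, ‖Y ω - μ[Y]‖ ^ 2 ∂μ) / 2 := by
        rw [integral_div, integral_add hX_sq hY_sq]
    _ ≤ (∫ ω, ‖X ω‖ ^ 2 ∂μ + ∫ ω, ‖Y ω‖ ^ 2 ∂μ) / 2 := by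
        linarith [integral_norm_sub_integral_sq_le_s5 hX, integral_norm_sub_integral_sq_le_s5 hY]

lemma integral_sum_centered_mul_conj_sum_centered {ι : Type*} [Fintype ι] {X Y : ι → Ω → 𝕜}
    (hX : ∀ s, MemLp (X s) 2 μ) (hY : ∀ s, MemLp (Y s) 2 μ)
    (hindep : ∀ s t, s ≠ t → X s ⟂ᵢ[μ] Y t) :
    ∫ ω, (∑ s, (X s ω - μ[X s])) * conj (∑ t, (Y t ω - μ[Y t])) ∂μ
      = ∑ s, hermitianCov (X s) (Y s) μ := by
  have hint (s t : ι) : Integrable (fun ω => (X s ω - μ[X s]) * conj (Y t ω - μ[Y t])) μ :=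
    ((hX s).sub (memLp_const _)).integrable_mul ((hY t).sub (memLp_const _)).star
  simp only [map_sum, Finset.sum_mul_sum]
  rw [integral_finsetSum _ fun s _ => integrable_finsetSum _ fun t _ => hint s t]
  refine Finset.sum_congr rfl fun s _ => ?_
  rw [integral_finsetSum _ fun t _ => hint s t]
  refine Finset.sum_eq_single_of_mem s (Finset.mem_univ s) fun t _ hts => ?_
  exact hermitianCov_eq_zero_of_indepFun (hindep s t hts.symm) ((hX s).integrable one_le_two)
    (hY t).aestronglyMeasurable

lemma integral_average_centered_mul_conj_average_centered {ι 𝓧 : Type*} [Fintype ι]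
    [MeasurableSpace 𝓧] {U : ι → Ω → 𝓧} {V : Ω → 𝓧} (hindep : Pairwise fun s t => U s ⟂ᵢ[μ] U t)
    (hid : ∀ s, IdentDistrib (U s) V μ μ) {φ ψ : 𝓧 → 𝕜} (hφ : Measurable φ) (hψ : Measurable ψ)
    (hφ₂ : MemLp (φ ∘ V) 2 μ) (hψ₂ : MemLp (ψ ∘ V) 2 μ) :
    ∫ ω, ((Fintype.card ι : 𝕜)⁻¹ * ∑ s, (φ (U s ω) - ∫ ω', φ (U s ω') ∂μ)) *
        conj ((Fintype.card ι : 𝕜)⁻¹ * ∑ s, (ψ (U s ω) - ∫ ω', ψ (U s ω') ∂μ)) ∂μ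
      = (Fintype.card ι : 𝕜)⁻¹ * hermitianCov (φ ∘ V) (ψ ∘ V) μ := by
  have hsum := integral_sum_centered_mul_conj_sum_centered (X := fun s => φ ∘ U s)
    (Y := fun s => ψ ∘ U s) (fun s => ((hid s).comp hφ).memLp_iff.2 hφ₂)
    (fun s => ((hid s).comp hψ).memLp_iff.2 hψ₂) fun s t hst => (hindep hst).comp hφ hψ
  simp only [Function.comp_apply, hermitianCov_comp_eq_of_identDistrib (hid _) hφ hψ,
    Finset.sum_const, Finset.card_univ, nsmul_eq_mul] at hsum
  simp only [map_mul, map_inv₀, map_natCast, mul_mul_mul_comm _ _ (Fintype.card ι : 𝕜)⁻¹,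
    integral_const_mul, hsum]
  cases isEmpty_or_nonempty ι with
  | inl _ => simp
  | inr _ => field_simp

end HermitianCov

section IndependentFamily

variable {Ω 𝕜 ι : Type*} [MeasurableSpace Ω] [RCLike 𝕜] {μ : Measure Ω} {w : ι → Ω → 𝕜}

lemma hermitianCov_mul_star_eq_zero_of_isolated (hw : iIndepFun w μ)
    (hm : ∀ i, AEStronglyMeasurable (w i) μ) {e f g h : ι} (he : μ[w e] = 0) (hef : e ≠ f)
    (heg : e ≠ g) (heh : e ≠ h) : hermitianCov (w e * star (w f)) (w g * star (w h)) μ = 0 := by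
  classical
  have hφ : Measurable fun x : ({e} : Finset ι) → 𝕜 => x ⟨e, by simp⟩ := measurable_pi_apply _
  have hψ : Continuous fun x : ({f, g, h} : Finset ι) → 𝕜 =>
      (star (x ⟨f, by simp⟩), x ⟨g, by simp⟩ * star (x ⟨h, by simp⟩)) := by fun_prop
  have hindep : w e ⟂ᵢ[μ] fun ω => (star (w f ω), w g ω * star (w h ω)) :=
    (hw.indepFun_finset₀ {e} {f, g, h} (by simp [hef, heg, heh])
      fun i => (hm i).aemeasurable).comp hφ hψ.measurable
  exact hermitianCov_mul_left_eq_zero_of_indepFun hindep (hm e) (hm f).star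
    ((hm g).mul (hm h).star) he

lemma memLp_two_mul_star {X Y : Ω → 𝕜} (hX : MemLp X 4 μ) (hY : MemLp Y 4 μ) :
    MemLp (X * star Y) 2 μ := by
  have : ENNReal.HolderTriple 4 4 2 := ⟨by
    rw [show (4 : ℝ≥0∞) = 2 * 2 by norm_num, ENNReal.mul_inv (by simp) (by simp), ← mul_add,
      ENNReal.inv_two_add_inv_two, mul_one]⟩
  exact hY.star.mul hX

lemma integral_norm_mul_star_sq_le {X Y : Ω → 𝕜} (hX : MemLp X 4 μ) (hY : MemLp Y 4 μ) :
    ∫ ω, ‖(X * star Y) ω‖ ^ 2 ∂μ ≤ (∫ ω, ‖X ω‖ ^ 4 ∂μ + ∫ ω, ‖Y ω‖ ^ 4 ∂μ) / 2 := by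
  have hX₄ : Integrable (fun ω => ‖X ω‖ ^ 4) μ := hX.integrable_norm_pow four_ne_zero
  have hY₄ : Integrable (fun ω => ‖Y ω‖ ^ 4) μ := hY.integrable_norm_pow four_ne_zero
  rw [← integral_add hX₄ hY₄, ← integral_div]
  refine integral_mono ((memLp_two_mul_star hX hY).integrable_norm_pow two_ne_zero)
    ((hX₄.add hY₄).div_const 2) fun ω => ?_
  simp only [Pi.mul_apply, Pi.star_apply, norm_mul, norm_star, mul_pow]
  linarith [two_mul_le_add_sq (‖X ω‖ ^ 2) (‖Y ω‖ ^ 2)]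

variable [IsProbabilityMeasure μ]

lemma hermitianCov_mul_star_eq_zero (hw : iIndepFun w μ) (hL : ∀ i, MemLp (w i) 2 μ)
    (hw₀ : ∀ i, μ[w i] = 0) {e f g h : ι} (hne : ¬(g = e ∧ h = f)) (hne_swap : ¬(g = f ∧ h = e)) :
    hermitianCov (w e * star (w f)) (w g * star (w h)) μ = 0 := by
  have hm (i : ι) : AEStronglyMeasurable (w i) μ := (hL i).aestronglyMeasurable
  have star_mul_star (i j : ι) : star (w i * star (w j)) = w j * star (w i) := by
    rw [star_mul, star_star]
  have isolated_or_paired : (e ≠ f ∧ e ≠ g ∧ e ≠ h) ∨ (f ≠ e ∧ f ≠ h ∧ f ≠ g) ∨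
      (g ≠ h ∧ g ≠ e ∧ g ≠ f) ∨ (h ≠ g ∧ h ≠ f ∧ h ≠ e) ∨ (e = f ∧ g = h ∧ e ≠ g) := by
    grind
  rcases isolated_or_paired with he | hf | hg | hh | ⟨rfl, rfl, heg⟩
  · exact hermitianCov_mul_star_eq_zero_of_isolated hw hm (hw₀ e) he.1 he.2.1 he.2.2
  · rw [← star_mul_star f e, ← star_mul_star h g, hermitianCov_star_star,
      hermitianCov_mul_star_eq_zero_of_isolated hw hm (hw₀ f) hf.1 hf.2.1 hf.2.2, map_zero]
  · rw [hermitianCov_swap,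
      hermitianCov_mul_star_eq_zero_of_isolated hw hm (hw₀ g) hg.1 hg.2.1 hg.2.2, map_zero]
  · rw [hermitianCov_swap, ← star_mul_star f e, ← star_mul_star h g, hermitianCov_star_star,
      hermitianCov_mul_star_eq_zero_of_isolated hw hm (hw₀ h) hh.1 hh.2.1 hh.2.2, map_zero,
      map_zero]
  · have hmul_star : Measurable fun z : 𝕜 => z * star z := Continuous.measurable (by fun_prop)
    exact hermitianCov_eq_zero_of_indepFun ((hw.indepFun heg).comp hmul_star hmul_star)
      ((hL e).integrable_mul (hL e).star) ((hm g).mul (hm g).star)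

lemma norm_hermitianCov_mul_star_le {M : ℝ} (hL : ∀ i, MemLp (w i) 4 μ)
    (hM : ∀ i, ∫ ω, ‖w i ω‖ ^ 4 ∂μ ≤ M) (e f g h : ι) :
    ‖hermitianCov (w e * star (w f)) (w g * star (w h)) μ‖ ≤ M := by
  have hcov := norm_hermitianCov_le (memLp_two_mul_star (hL e) (hL f))
    (memLp_two_mul_star (hL g) (hL h))
  have hef := integral_norm_mul_star_sq_le (hL e) (hL f)
  have hgh := integral_norm_mul_star_sq_le (hL g) (hL h)
  linarith [hM e, hM f, hM g, hM h]

end IndependentFamily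

section RandomMatrix

variable {Ω m n ι : Type*} [MeasurableSpace Ω] {μ : Measure Ω}

/-- The covariance matrix of a centred random matrix `X`, with pairs of indices of `X` as rows and
columns. The means are not subtracted. -/
noncomputable def covMatrix (μ : Measure Ω) (X : Ω → Matrix m n ℂ) : Matrix (m × n) (m × n) ℂ :=
  Matrix.of fun p q => ∫ ω, X ω p.1 p.2 * conj (X ω q.1 q.2) ∂μ

/-- The average over `s` of the centred random matrices `W_s ⊗ conj(W_s) - E(W_s ⊗ conj(W_s))`. -/
noncomputable def kroneckerConjAverage [Fintype ι] (μ : Measure Ω) (Ws : ι → Ω → Matrix m n ℂ)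
    (ω : Ω) : Matrix (m × m) (n × n) ℂ :=
  (Fintype.card ι : ℂ)⁻¹ • ∑ s, (Ws s ω ⊗ₖ (Ws s ω).map conj
    - matExp μ fun ω' => Ws s ω' ⊗ₖ (Ws s ω').map conj)

lemma measurable_kronecker_conj_apply (i : m × m) (j : n × n) :
    Measurable fun A : Matrix m n ℂ => (A ⊗ₖ A.map conj) i j := by
  have hentry (k : m) (l : n) : Measurable fun A : Matrix m n ℂ => A k l :=
    (measurable_pi_apply l).comp (measurable_pi_apply (X := fun _ : m => n → ℂ) k)
  exact (hentry _ _).mul (Complex.continuous_conj.measurable.comp (hentry _ _))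

variable [IsProbabilityMeasure μ] [Fintype ι] {W : Ω → Matrix m n ℂ} {Ws : ι → Ω → Matrix m n ℂ}

lemma covMatrix_kroneckerConjAverage_apply (hL : ∀ i j, MemLp (fun ω => W ω i j) 4 μ)
    (hindep : Pairwise fun s t => Ws s ⟂ᵢ[μ] Ws t) (hid : ∀ s, IdentDistrib (Ws s) W μ μ)
    (p q : (m × m) × (n × n)) :
    covMatrix μ (kroneckerConjAverage μ Ws) p q = (Fintype.card ι : ℂ)⁻¹ *
      hermitianCov ((W · p.1.1 p.2.1) * star (W · p.1.2 p.2.2))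
        ((W · q.1.1 q.2.1) * star (W · q.1.2 q.2.2)) μ := by
  have hcov := integral_average_centered_mul_conj_average_centered hindep hid
    (measurable_kronecker_conj_apply p.1 p.2) (measurable_kronecker_conj_apply q.1 q.2)
    (memLp_two_mul_star (hL _ _) (hL _ _)) (memLp_two_mul_star (hL _ _) (hL _ _))
  simp only [covMatrix, kroneckerConjAverage, matExp, Matrix.of_apply, Matrix.smul_apply,
    Matrix.sum_apply, Matrix.sub_apply, smul_eq_mul]
  exact hcov

theorem covariance_param_bound_general [Fintype m] [DecidableEq m] [Fintype n] [DecidableEq n]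
    {M : ℝ} (hM : 0 ≤ M) (hindep_entries : iIndepFun (fun (p : m × n) ω => W ω p.1 p.2) μ)
    (hL : ∀ i j, MemLp (fun ω => W ω i j) 4 μ) (hcentered : ∀ i j, ∫ ω, W ω i j ∂μ = 0)
    (hfourth : ∀ i j, ∫ ω, ‖W ω i j‖ ^ 4 ∂μ ≤ M) (hindep : Pairwise fun s t => Ws s ⟂ᵢ[μ] Ws t)
    (hid : ∀ s, IdentDistrib (Ws s) W μ μ) :
    Matrix.opNorm2 (covMatrix μ (kroneckerConjAverage μ Ws)) ≤ 1 / Fintype.card ι * (2 * M) := by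
  rw [mul_left_comm]
  refine opNorm2_le_two_mul_of_apply_eq_zero (by positivity) (fun p q => ?_)
    ((Equiv.prodComm m m).prodCongr (Equiv.prodComm n n)) fun p q hqp hqσ => ?_
  · rw [covMatrix_kroneckerConjAverage_apply hL hindep hid, norm_mul, norm_inv,
      RCLike.norm_natCast, one_div]
    gcongr
    exact norm_hermitianCov_mul_star_le (w := fun (p : m × n) ω => W ω p.1 p.2)
      (fun i => hL i.1 i.2) (fun i => hfourth i.1 i.2) (p.1.1, p.2.1) (p.1.2, p.2.2)
      (q.1.1, q.2.1) (q.1.2, q.2.2)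
  · rw [covMatrix_kroneckerConjAverage_apply hL hindep hid]
    refine mul_eq_zero_of_right _ ?_
    refine hermitianCov_mul_star_eq_zero hindep_entries
      (fun i => (hL i.1 i.2).mono_exponent (by norm_num)) (fun i => hcentered i.1 i.2)
      (e := (p.1.1, p.2.1)) (f := (p.1.2, p.2.2)) (g := (q.1.1, q.2.1)) (h := (q.1.2, q.2.2))
      ?_ ?_
    · grind
    · simp only [Equiv.prodCongr_apply, Prod.map, Equiv.prodComm_apply] at hqσ
      grind

end RandomMatrix

lemma PaperAssumptions.integral_norm_pow_four_le {Ω : Type*} [MeasurableSpace Ω] {μ : Measure Ω}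
    {n : ℕ} {K K' β : ℝ} {η : Matrix (Fin n) (Fin n) ℝ} {W : Ω → Matrix (Fin n) (Fin n) ℂ}
    (hW : PaperAssumptions μ n K K' β η W) (hK : 0 ≤ K) (i j : Fin n) :
    ∫ ω, ‖W ω i j‖ ^ 4 ∂μ ≤ (K * 2 ^ β * K') ^ 2 / Real.log n ^ (2 * max (β / 2) 2) := by
  have h₀ : 0 ≤ ∫ ω, ‖W ω i j‖ ^ 4 ∂μ := integral_nonneg fun ω => by positivity
  have hroot : √(∫ ω, ‖W ω i j‖ ^ 4 ∂μ) ≤ K * 2 ^ β * η i j := by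
    simpa [Real.sqrt_eq_rpow] using hW.moment_growth 2 one_le_two i j
  have hlog : Real.log n ^ (2 * max (β / 2) 2) = (Real.log n ^ max (β / 2) 2) ^ 2 := by
    rw [mul_comm]
    exact_mod_cast Real.rpow_mul_natCast (Real.log_natCast_nonneg n) _ 2
  calc ∫ ω, ‖W ω i j‖ ^ 4 ∂μ = √(∫ ω, ‖W ω i j‖ ^ 4 ∂μ) ^ 2 := (Real.sq_sqrt h₀).symm
    _ ≤ (K * 2 ^ β * (K' / Real.log n ^ max (β / 2) 2)) ^ 2 := by
        gcongr
        exact hroot.trans (by gcongr; exact hW.max_variance i j)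
    _ = (K * 2 ^ β * K') ^ 2 / Real.log n ^ (2 * max (β / 2) 2) := by
        rw [hlog, ← mul_div_assoc, div_pow]

/-- Lemma 2.7 of the paper: for `X = (1/d) ∑_s (W_s ⊗ conj(W_s) − E(W_s ⊗ conj(W_s)))` with
`W_1, …, W_d` independent copies of a random matrix `W` satisfying Assumptions 1–4,
`‖Cov(X)‖ ≤ (1/d) · C_β/(log n)^{2α_β}`, where `Cov(X)` is the `n⁴ × n⁴` matrix with entries
`Cov(X)_{(a,b),(c,e)} = E(X_{ab} conj(X_{ce}))` (recall `E(X) = 0`), `C_β > 0` depends only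
on `β, K, K'` and `α_β = max (β/2) 2`. -/
theorem covariance_param_bound :
    ∀ K K' β : ℝ, 0 < K → 0 < K' → 0 ≤ β →
    ∃ Cβ : ℝ, 0 < Cβ ∧
    ∀ n d : ℕ, 2 ≤ n → d ≤ n ^ 2 →
    ∀ (Ω : Type) (_ : MeasurableSpace Ω) (μ : Measure Ω), IsProbabilityMeasure μ →
    ∀ (η : Matrix (Fin n) (Fin n) ℝ) (W : Ω → Matrix (Fin n) (Fin n) ℂ)
      (Ws : Fin d → Ω → Matrix (Fin n) (Fin n) ℂ),
      PaperAssumptions μ n K K' β η W →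
      iIndepFun Ws μ →
      (∀ s, IdentDistrib (Ws s) W μ μ) →
      ∀ X : Ω → Matrix (Fin n × Fin n) (Fin n × Fin n) ℂ,
      X = (fun ω => (d : ℂ)⁻¹ • ∑ s,
            (Ws s ω ⊗ₖ (Ws s ω).map (starRingEnd ℂ)
              - matExp μ fun ω' => Ws s ω' ⊗ₖ (Ws s ω').map (starRingEnd ℂ))) →
      Matrix.opNorm2
          (Matrix.of fun (p q : (Fin n × Fin n) × (Fin n × Fin n)) =>
            ∫ ω, X ω p.1 p.2 * starRingEnd ℂ (X ω q.1 q.2) ∂μ)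
        ≤ (1 / d) * (Cβ / Real.log n ^ (2 * max (β / 2) 2)) := by
  intro K K' β hK hK' _
  refine ⟨2 * (K * 2 ^ β * K') ^ 2, by positivity, ?_⟩
  rintro n d - - Ω _ μ _ η W Ws hW hindep hid X rfl
  simpa only [covMatrix, kroneckerConjAverage, Fintype.card_fin, mul_div_assoc] using
    covariance_param_bound_general (by positivity) hW.entries_indep
      (fun i j => hW.entries_memLp i j 4) hW.entries_centered
      (hW.integral_norm_pow_four_le hK.le) (fun _ _ hst => hindep.indepFun hst) hid
end

section
/- Let W = (W_{ij}) be an n×n complex random matrix whose entries are independent with E(W_{ij}) = 0, E|W_{ij}|² = η_{ij} and E|W_{ij}|⁴ < ∞, and set ζ_{ij} = E(W_{ij}²). Then E( (W ⊗ conj(W))(W ⊗ conj(W))* ) − E(W ⊗ conj(W)) · (E(W ⊗ conj(W)))* = R + S + T, where R = ∑_{i,j,i',j'=1}^n η_{ij} η_{i'j'} E_{ii} ⊗ E_{i'i'}, S = ∑_{i,j,k=1}^n ζ_{ij} conj(ζ_{kj}) E_{ik} ⊗ E_{ki}, and T = ∑_{i,j=1}^n ( E|W_{ij}|⁴ − 2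 η_{ij}² − |ζ_{ij}|² ) E_{ii} ⊗ E_{ii}. -/
open MeasureTheory ProbabilityTheory Matrix
open scoped Kronecker ENNReal

/-!
Each entry of the left-hand side is a sum of covariances of products `W_{aj} conj(W_{bl})` and
`W_{cj} conj(W_{dl})`. For independent centered variables a joint fourth moment vanishes as soon as
one index occurs only once, so the four indices must be paired. The pairing inside each product is
cancelled by the product of the means; the two remaining pairings give `R` and `S`. When all four
indices coincide, the three pairings together count `2 η² + |ζ|²` instead of `E|W|⁴`, and `T`
corrects for the difference.
-/

open scoped ComplexConjugate

section Independence

variable {ι κ Ω β 𝕜 : Type*} [RCLike 𝕜] [MeasurableSpace Ω] [MeasurableSpace β] {μ : Measure Ω}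

theorem integral_prod_comp_eq_zero_of_isolated [Fintype κ] {X : ι → Ω → β} (hX : iIndepFun X μ)
    (hX_meas : ∀ i, AEMeasurable (X i) μ) (v : κ → ι) {f : κ → β → 𝕜}
    (hf : ∀ k, Measurable (f k)) {k : κ} (hk : ∀ l, l ≠ k → v l ≠ v k)
    (hk_zero : ∫ ω, f k (X (v k) ω) ∂μ = 0) :
    ∫ ω, ∏ l, f l (X (v l) ω) ∂μ = 0 := by
  classical
  let others : Finset ι := (Finset.univ.erase k).image v
  have mem_others (l : Finset.univ.erase k) : v l ∈ others := Finset.mem_image_of_mem v l.2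
  have disjoint_others : Disjoint {v k} others := by simpa [others] using hk
  have indep := hX.indepFun_finset₀ {v k} others disjoint_others hX_meas
  have factor := indep.integral_fun_comp_mul_comp
    (f := fun x => f k (x ⟨v k, Finset.mem_singleton_self _⟩))
    (g := fun y => ∏ l : Finset.univ.erase k, f l (y ⟨v l, mem_others l⟩))
    (by fun_prop) (by fun_prop)
    (Measurable.aestronglyMeasurable (by fun_prop)) (Measurable.aestronglyMeasurable (by fun_prop))
  rw [hk_zero, zero_mul] at factor
  rw [← factor]
  congr! 2 with ω
  rw [← Finset.mul_prod_erase _ _ (Finset.mem_univ k),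
    ← Finset.prod_coe_sort _ fun l => f l (X (v l) ω)]

theorem integral_comp_mul_comp_of_ne {X : ι → Ω → β} (hX : iIndepFun X μ)
    (hX_meas : ∀ i, AEMeasurable (X i) μ) {f g : β → 𝕜} (hf : Measurable f) (hg : Measurable g)
    {p q : ι} (hpq : p ≠ q) :
    ∫ ω, f (X p ω) * g (X q ω) ∂μ = (∫ ω, f (X p ω) ∂μ) * ∫ ω, g (X q ω) ∂μ :=
  (hX.indepFun hpq).integral_fun_comp_mul_comp (hX_meas p) (hX_meas q)
    hf.aestronglyMeasurable hg.aestronglyMeasurable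

end Independence

section ComplexMoments

variable {Ω : Type*} [MeasurableSpace Ω] {μ : Measure Ω}

theorem integral_mul_conj_self (Y : Ω → ℂ) :
    ∫ ω, Y ω * conj (Y ω) ∂μ = ((∫ ω, ‖Y ω‖ ^ 2 ∂μ : ℝ) : ℂ) := by
  simp only [Complex.mul_conj', ← Complex.ofReal_pow, integral_complex_ofReal]

theorem integral_conj_sq (Y : Ω → ℂ) :
    ∫ ω, conj (Y ω) ^ 2 ∂μ = conj (∫ ω, Y ω ^ 2 ∂μ) := by
  simp only [← map_pow, integral_conj]

/-- The joint cumulant `κ(Y, conj Y, conj Y, Y)` of a centered complex random variable `Y`,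
as given by the moment formula for centered variables: the part of `E|Y|⁴` that the three pairings
of the four factors do not account for. -/
noncomputable def fourthCumulant (μ : Measure Ω) (Y : Ω → ℂ) : ℝ :=
  (∫ ω, ‖Y ω‖ ^ 4 ∂μ) - 2 * (∫ ω, ‖Y ω‖ ^ 2 ∂μ) ^ 2 - ‖∫ ω, Y ω ^ 2 ∂μ‖ ^ 2

theorem integral_mul_conj_mul_conj_self (Y : Ω → ℂ) :
    ∫ ω, Y ω * conj (Y ω) * conj (Y ω * conj (Y ω)) ∂μ
      = 2 * ((∫ ω, ‖Y ω‖ ^ 2 ∂μ : ℝ) : ℂ) ^ 2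
        + (∫ ω, Y ω ^ 2 ∂μ) * conj (∫ ω, Y ω ^ 2 ∂μ) + fourthCumulant μ Y := by
  have fourth_power (w : ℂ) : w * conj w * conj (w * conj w) = ((‖w‖ ^ 4 : ℝ) : ℂ) := by
    rw [Complex.mul_conj' (w * _), norm_mul, Complex.norm_conj]
    push_cast
    ring
  simp only [fourth_power, integral_complex_ofReal, fourthCumulant, Complex.mul_conj' (∫ _, _ ∂μ)]
  push_cast
  ring

variable {ι : Type*} {X : ι → Ω → ℂ}

theorem integral_mul_conj_mul_conj_of_isolated (hX : iIndepFun X μ)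
    (hX_meas : ∀ i, AEMeasurable (X i) μ) (hX_zero : ∀ i, ∫ ω, X i ω ∂μ = 0) {p q r s : ι}
    (h : (q ≠ p ∧ r ≠ p ∧ s ≠ p) ∨ (p ≠ q ∧ r ≠ q ∧ s ≠ q) ∨
      (p ≠ r ∧ q ≠ r ∧ s ≠ r) ∨ (p ≠ s ∧ q ≠ s ∧ r ≠ s)) :
    ∫ ω, X p ω * conj (X q ω) * conj (X r ω * conj (X s ω)) ∂μ = 0 := by
  obtain ⟨k, hk⟩ : ∃ k : Fin 4, ∀ l, l ≠ k → ![p, q, r, s] l ≠ ![p, q, r, s] k := by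
    simpa [Fin.exists_fin_succ, Fin.forall_fin_succ] using h
  let f : Fin 4 → ℂ → ℂ := ![id, conj, conj, id]
  have f_meas (l : Fin 4) : Measurable (f l) := by
    fin_cases l
    exacts [measurable_id, Complex.continuous_conj.measurable,
      Complex.continuous_conj.measurable, measurable_id]
  have f_zero (l : Fin 4) (i : ι) : ∫ ω, f l (X i ω) ∂μ = 0 := by
    fin_cases l <;> simp [f, integral_conj, hX_zero]
  rw [← integral_prod_comp_eq_zero_of_isolated hX hX_meas _ f_meas hk (f_zero k _)]
  simp [f, Fin.prod_univ_four, mul_assoc]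

variable [DecidableEq ι]

theorem integral_mul_conj_of_iIndepFun (hX : iIndepFun X μ) (hX_meas : ∀ i, AEMeasurable (X i) μ)
    (hX_zero : ∀ i, ∫ ω, X i ω ∂μ = 0) (p q : ι) :
    ∫ ω, X p ω * conj (X q ω) ∂μ
      = if p = q then ((∫ ω, ‖X p ω‖ ^ 2 ∂μ : ℝ) : ℂ) else 0 := by
  split_ifs with hpq
  · rw [← hpq, integral_mul_conj_self]
  · rw [integral_comp_mul_comp_of_ne (f := fun z => z) hX hX_meas measurable_id
      Complex.continuous_conj.measurable hpq, hX_zero, zero_mul]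

theorem integral_mul_conj_mul_conj_of_iIndepFun (hX : iIndepFun X μ)
    (hX_meas : ∀ i, AEMeasurable (X i) μ) (hX_zero : ∀ i, ∫ ω, X i ω ∂μ = 0) (p q r s : ι) :
    ∫ ω, X p ω * conj (X q ω) * conj (X r ω * conj (X s ω)) ∂μ
      = (if p = q ∧ r = s then
          ((∫ ω, ‖X p ω‖ ^ 2 ∂μ : ℝ) : ℂ) * ((∫ ω, ‖X r ω‖ ^ 2 ∂μ : ℝ) : ℂ) else 0)
        + (if p = r ∧ q = s then
          ((∫ ω, ‖X p ω‖ ^ 2 ∂μ : ℝ) : ℂ) * ((∫ ω, ‖X q ω‖ ^ 2 ∂μ : ℝ) : ℂ) else 0)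
        + (if p = s ∧ q = r then (∫ ω, X p ω ^ 2 ∂μ) * conj (∫ ω, X q ω ^ 2 ∂μ) else 0)
        + (if p = q ∧ p = r ∧ p = s then (fourthCumulant μ (X p) : ℂ) else 0) := by
  have conj_meas : Measurable (conj : ℂ → ℂ) := Complex.continuous_conj.measurable
  have factor {f g : ℂ → ℂ} (hf : Measurable f) (hg : Measurable g) {i j : ι} (hij : i ≠ j) :=
    integral_comp_mul_comp_of_ne hX hX_meas hf hg hij
  have isolated_or_paired :
      ((q ≠ p ∧ r ≠ p ∧ s ≠ p) ∨ (p ≠ q ∧ r ≠ q ∧ s ≠ q) ∨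
        (p ≠ r ∧ q ≠ r ∧ s ≠ r) ∨ (p ≠ s ∧ q ≠ s ∧ r ≠ s)) ∨ (p = q ∧ p = r ∧ p = s) ∨
      (p = q ∧ r = s ∧ p ≠ r) ∨ (p = r ∧ q = s ∧ p ≠ q) ∨ (p = s ∧ q = r ∧ p ≠ q) := by
    grind
  rcases isolated_or_paired with
    isolated | ⟨rfl, rfl, rfl⟩ | ⟨rfl, rfl, hpr⟩ | ⟨rfl, rfl, hpq⟩ | ⟨rfl, rfl, hpq⟩
  · rw [integral_mul_conj_mul_conj_of_isolated hX hX_meas hX_zero isolated]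
    grind
  · rw [integral_mul_conj_mul_conj_self]
    simp only [and_self, if_true]
    ring
  · have split := factor (f := fun z => z * conj z) (g := fun z => conj (z * conj z))
      (by fun_prop) (by fun_prop) hpr
    rw [split, integral_conj, integral_mul_conj_self, integral_mul_conj_self, Complex.conj_ofReal]
    simp [hpr]
  · have regroup (ω : Ω) : X p ω * conj (X q ω) * conj (X p ω * conj (X q ω))
        = X p ω * conj (X p ω) * (X q ω * conj (X q ω)) := by
      rw [map_mul, Complex.conj_conj]
      ring
    have split := factor (f := fun z => z * conj z) (g := fun z => z * conj z)
      (by fun_prop) (by fun_prop) hpq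
    simp_rw [regroup, split, integral_mul_conj_self]
    simp [hpq, hpq.symm]
  · have regroup (ω : Ω) : X p ω * conj (X q ω) * conj (X q ω * conj (X p ω))
        = X p ω ^ 2 * conj (X q ω) ^ 2 := by
      rw [map_mul, Complex.conj_conj]
      ring
    have split := factor (f := fun z => z ^ 2) (g := fun z => conj z ^ 2)
      (by fun_prop) (by fun_prop) hpq
    simp_rw [regroup, split, integral_conj_sq]
    simp [hpq]

theorem covariance_mul_conj_of_iIndepFun (hX : iIndepFun X μ) (hX_meas : ∀ i, AEMeasurable (X i) μ)
    (hX_zero : ∀ i, ∫ ω, X i ω ∂μ = 0) (p q r s : ι) :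
    ∫ ω, X p ω * conj (X q ω) * conj (X r ω * conj (X s ω)) ∂μ
        - (∫ ω, X p ω * conj (X q ω) ∂μ) * conj (∫ ω, X r ω * conj (X s ω) ∂μ)
      = (if p = r ∧ q = s then
          ((∫ ω, ‖X p ω‖ ^ 2 ∂μ : ℝ) : ℂ) * ((∫ ω, ‖X q ω‖ ^ 2 ∂μ : ℝ) : ℂ) else 0)
        + (if p = s ∧ q = r then (∫ ω, X p ω ^ 2 ∂μ) * conj (∫ ω, X q ω ^ 2 ∂μ) else 0)
        + (if p = q ∧ p = r ∧ p = s then (fourthCumulant μ (X p) : ℂ) else 0) := by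
  rw [integral_mul_conj_mul_conj_of_iIndepFun hX hX_meas hX_zero,
    integral_mul_conj_of_iIndepFun hX hX_meas hX_zero,
    integral_mul_conj_of_iIndepFun hX hX_meas hX_zero, apply_ite conj, Complex.conj_ofReal,
    map_zero, ite_zero_mul_ite_zero]
  ring

end ComplexMoments

section KroneckerSingle

variable {m n R : Type*} [Fintype m] [Fintype n] [DecidableEq m] [Semiring R]

theorem sum_smul_single_kronecker_single_diag_apply (f : m → n → m → n → R) (a b c d : m) :
    (∑ i, ∑ j, ∑ i', ∑ j', f i j i' j' • (single i i (1 : R) ⊗ₖ single i' i' (1 : R)))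
        (a, b) (c, d)
      = if a = c ∧ b = d then ∑ j, ∑ j', f a j b j' else 0 := by
  simp only [Matrix.sum_apply, Matrix.smul_apply, kroneckerMap_apply, single_apply, ite_and,
    mul_ite, mul_one, mul_zero, smul_eq_mul, Finset.sum_ite_irrel, Finset.sum_const_zero,
    Finset.sum_ite_eq', Finset.mem_univ, ↓reduceIte]
  grind

theorem sum_smul_single_kronecker_single_swap_apply (f : m → n → m → R) (a b c d : m) :
    (∑ i, ∑ j, ∑ k, f i j k • (single i k (1 : R) ⊗ₖ single k i (1 : R))) (a, b) (c, d)
      = if a = d ∧ b = c then ∑ j, f a j b else 0 := by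
  simp only [Matrix.sum_apply, Matrix.smul_apply, kroneckerMap_apply, single_apply, ite_and,
    mul_ite, mul_one, mul_zero, smul_eq_mul, Finset.sum_ite_irrel, Finset.sum_const_zero,
    Finset.sum_ite_eq', Finset.mem_univ, ↓reduceIte]
  grind

theorem sum_smul_single_kronecker_single_self_apply (f : m → n → R) (a b c d : m) :
    (∑ i, ∑ j, f i j • (single i i (1 : R) ⊗ₖ single i i (1 : R))) (a, b) (c, d)
      = if a = b ∧ a = c ∧ a = d then ∑ j, f a j else 0 := by
  simp only [Matrix.sum_apply, Matrix.smul_apply, kroneckerMap_apply, single_apply, ite_and,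
    mul_ite, mul_one, mul_zero, smul_eq_mul, Finset.sum_ite_irrel, Finset.sum_const_zero,
    Finset.sum_ite_eq', Finset.mem_univ, ↓reduceIte]
  grind

end KroneckerSingle

section RandomMatrix

variable {Ω : Type*} [MeasurableSpace Ω] {μ : Measure Ω}

theorem matExp_mul_conjTranspose_sub_apply {m n : Type*} [Fintype n] {A : Ω → Matrix m n ℂ}
    (hA : ∀ i j, MemLp (fun ω => A ω i j) 2 μ) (i k : m) :
    (matExp μ (fun ω => A ω * (A ω)ᴴ) - matExp μ A * (matExp μ A)ᴴ) i k
      = ∑ j, (∫ ω, A ω i j * conj (A ω k j) ∂μ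
          - (∫ ω, A ω i j ∂μ) * conj (∫ ω, A ω k j ∂μ)) := by
  have integrable_mul_conj (j : n) : Integrable (fun ω => A ω i j * conj (A ω k j)) μ :=
    (hA i j).integrable_mul (hA k j).star
  simp only [matExp, Matrix.sub_apply, of_apply, mul_apply, conjTranspose_apply,
    ← starRingEnd_apply, Finset.sum_sub_distrib]
  rw [integral_finsetSum _ fun j _ => integrable_mul_conj j]

theorem memLp_two_mul_conj_s14 {Y Z : Ω → ℂ} (hY : MemLp Y 4 μ) (hZ : MemLp Z 4 μ) :
    MemLp (fun ω => Y ω * conj (Z ω)) 2 μ := by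
  have : ENNReal.HolderTriple 4 4 2 := ⟨by
    rw [← ENNReal.toReal_eq_toReal_iff' (by simp) (by simp), ENNReal.toReal_add (by simp) (by simp)]
    norm_num⟩
  exact hZ.star.mul' hY

variable {m n : Type*} [Fintype n] [DecidableEq m]

theorem matExp_kronecker_conj_sub_apply {W : Ω → Matrix m n ℂ}
    (hindep : iIndepFun (fun (p : m × n) ω => W ω p.1 p.2) μ)
    (hL4 : ∀ i j, MemLp (fun ω => W ω i j) 4 μ) (hcent : ∀ i j, ∫ ω, W ω i j ∂μ = 0)
    (a b c d : m) :
    (matExp μ (fun ω => (W ω ⊗ₖ (W ω).map conj) * (W ω ⊗ₖ (W ω).map conj)ᴴ)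
      - matExp μ (fun ω => W ω ⊗ₖ (W ω).map conj)
        * (matExp μ (fun ω => W ω ⊗ₖ (W ω).map conj))ᴴ) (a, b) (c, d)
    = (if a = c ∧ b = d then
        ∑ j, ∑ l, ((∫ ω, ‖W ω a j‖ ^ 2 ∂μ : ℝ) : ℂ) * ((∫ ω, ‖W ω b l‖ ^ 2 ∂μ : ℝ) : ℂ) else 0)
      + (if a = d ∧ b = c then
        ∑ j, (∫ ω, W ω a j ^ 2 ∂μ) * conj (∫ ω, W ω b j ^ 2 ∂μ) else 0)
      + (if a = b ∧ a = c ∧ a = d then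
        ∑ j, (fourthCumulant μ (fun ω => W ω a j) : ℂ) else 0) := by
  classical
  have hW_meas (p : m × n) : AEMeasurable (fun ω => W ω p.1 p.2) μ := (hL4 p.1 p.2).aemeasurable
  have covariance (j l : n) :=
    covariance_mul_conj_of_iIndepFun hindep hW_meas (fun p => hcent p.1 p.2)
      (a, j) (b, l) (c, j) (d, l)
  have kronecker_memLp (p : m × m) (q : n × n) :
      MemLp (fun ω => (W ω ⊗ₖ (W ω).map conj) p q) 2 μ :=
    memLp_two_mul_conj_s14 (hL4 p.1 q.1) (hL4 p.2 q.2)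
  rw [matExp_mul_conjTranspose_sub_apply kronecker_memLp]
  simp only [kroneckerMap_apply, map_apply, Fintype.sum_prod_type, covariance, Prod.mk.injEq,
    Finset.sum_add_distrib]
  have swap_iff (j l : n) :
      (a = d ∧ j = l) ∧ b = c ∧ l = j ↔ (a = d ∧ b = c) ∧ j = l := by grind
  have self_iff (j l : n) :
      (a = b ∧ j = l) ∧ a = c ∧ a = d ∧ j = l ↔ (a = b ∧ a = c ∧ a = d) ∧ j = l := by grind
  simp only [and_true, swap_iff, self_iff, ite_and _ (_ = (_ : n)), Finset.sum_ite_irrel,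
    Finset.sum_const_zero, Finset.sum_ite_eq, Finset.mem_univ, if_true]

theorem second_moment_decomposition_general [Fintype m] {η : Matrix m n ℝ} {ζ : Matrix m n ℂ}
    {W : Ω → Matrix m n ℂ} (hindep : iIndepFun (fun (p : m × n) ω => W ω p.1 p.2) μ)
    (hL4 : ∀ i j, MemLp (fun ω => W ω i j) 4 μ) (hcent : ∀ i j, ∫ ω, W ω i j ∂μ = 0)
    (hvar : ∀ i j, ∫ ω, ‖W ω i j‖ ^ 2 ∂μ = η i j) (hzeta : ∀ i j, ∫ ω, W ω i j ^ 2 ∂μ = ζ i j) :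
    matExp μ (fun ω => (W ω ⊗ₖ (W ω).map conj) * (W ω ⊗ₖ (W ω).map conj)ᴴ)
      - matExp μ (fun ω => W ω ⊗ₖ (W ω).map conj)
        * (matExp μ (fun ω => W ω ⊗ₖ (W ω).map conj))ᴴ
    = (∑ i, ∑ j, ∑ i', ∑ j',
        ((η i j * η i' j' : ℝ) : ℂ) • (single i i (1 : ℂ) ⊗ₖ single i' i' (1 : ℂ)))
      + (∑ i, ∑ j, ∑ k, (ζ i j * conj (ζ k j)) • (single i k (1 : ℂ) ⊗ₖ single k i (1 : ℂ)))
      + (∑ i, ∑ j, (((∫ ω, ‖W ω i j‖ ^ 4 ∂μ) - 2 * η i j ^ 2 - ‖ζ i j‖ ^ 2 : ℝ) : ℂ) •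
          (single i i (1 : ℂ) ⊗ₖ single i i (1 : ℂ))) := by
  ext ⟨a, b⟩ ⟨c, d⟩
  rw [matExp_kronecker_conj_sub_apply hindep hL4 hcent, Matrix.add_apply, Matrix.add_apply,
    sum_smul_single_kronecker_single_diag_apply, sum_smul_single_kronecker_single_swap_apply,
    sum_smul_single_kronecker_single_self_apply]
  simp only [fourthCumulant, hvar, hzeta, Complex.ofReal_mul]

end RandomMatrix

/-- The covariance computation in Lemma 2.6 of the paper: for `W` with independent centered
entries with `E|W_{ij}|² = η_{ij}`, `ζ_{ij} = E(W_{ij}²)` and finite fourth moments,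
`E((W ⊗ conj W)(W ⊗ conj W)*) − E(W ⊗ conj W)(E(W ⊗ conj W))* = R + S + T` with
`R = ∑_{i,j,i',j'} η_{ij} η_{i'j'} E_{ii} ⊗ E_{i'i'}`,
`S = ∑_{i,j,k} ζ_{ij} conj(ζ_{kj}) E_{ik} ⊗ E_{ki}` and
`T = ∑_{i,j} (E|W_{ij}|⁴ − 2η_{ij}² − |ζ_{ij}|²) E_{ii} ⊗ E_{ii}`. -/
theorem second_moment_decomposition
    (n : ℕ)
    (Ω : Type) (_ : MeasurableSpace Ω) (μ : Measure Ω) (_ : IsProbabilityMeasure μ)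
    (η : Matrix (Fin n) (Fin n) ℝ) (ζ : Matrix (Fin n) (Fin n) ℂ)
    (W : Ω → Matrix (Fin n) (Fin n) ℂ)
    (hindep : iIndepFun
      (fun (p : Fin n × Fin n) ω => W ω p.1 p.2) μ)
    (hL4 : ∀ i j, MemLp (fun ω => W ω i j) 4 μ)
    (hcent : ∀ i j, ∫ ω, W ω i j ∂μ = 0)
    (hvar : ∀ i j, ∫ ω, ‖W ω i j‖ ^ 2 ∂μ = η i j)
    (hzeta : ∀ i j, ∫ ω, (W ω i j) ^ 2 ∂μ = ζ i j) :
    matExp μ (fun ω => (W ω ⊗ₖ (W ω).map (starRingEnd ℂ))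
        * (W ω ⊗ₖ (W ω).map (starRingEnd ℂ))ᴴ)
      - matExp μ (fun ω => W ω ⊗ₖ (W ω).map (starRingEnd ℂ))
        * (matExp μ (fun ω => W ω ⊗ₖ (W ω).map (starRingEnd ℂ)))ᴴ
    = (∑ i : Fin n, ∑ j : Fin n, ∑ i' : Fin n, ∑ j' : Fin n,
        ((η i j * η i' j' : ℝ) : ℂ) •
          (Matrix.single i i (1 : ℂ) ⊗ₖ Matrix.single i' i' (1 : ℂ)))
      + (∑ i : Fin n, ∑ j : Fin n, ∑ k : Fin n,
        (ζ i j * starRingEnd ℂ (ζ k j)) •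
          (Matrix.single i k (1 : ℂ) ⊗ₖ Matrix.single k i (1 : ℂ)))
      + (∑ i : Fin n, ∑ j : Fin n,
        (((∫ ω, ‖W ω i j‖ ^ 4 ∂μ) - 2 * η i j ^ 2 - ‖ζ i j‖ ^ 2 : ℝ) : ℂ) •
          (Matrix.single i i (1 : ℂ) ⊗ₖ Matrix.single i i (1 : ℂ))) := by
  exact second_moment_decomposition_general hindep hL4 hcent hvar hzeta
end
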